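/- Let 0 < q < 1 (real) and m ≥ 1. Then □(q)^{4m(m+1)} = (2^{m(2m+1)} / Π_{i=1}^{2m} i!) · det_{1≤i,j≤m}( t_{i+j} + 4·(−1)^{i+j} · Σ_{k=1}^∞ q^k k^{2i+2j−1}/(1 − (−q)^k) ), where each inner series converges absolutely (note 1 − (−q)^k ≥ 1 − q > 0). -/

import Mathlib

/-- The generating function `□(q) = Σ_{n∈ℤ} q^{n²}` for sums of squares. -/
noncomputable def sqGen (q : ℝ) : ℝ := ∑' n : ℤ, q ^ (n.natAbs ^ 2)
/-- The tangent numbers `t_n = (4^n − 1)|B_{2n}|/n`, so that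
`tan(x/2) = Σ_{n≥1} t_n x^{2n−1}/(2n−1)!`. -/
noncomputable def tangentNum (n : ℕ) : ℝ :=
  ((4 : ℝ) ^ n - 1) * |((bernoulli (2 * n) : ℚ) : ℝ)| / n

section

open Finset

/-- Coefficients of `D^i v_1` in the basis `v_{n+1}`. -/
noncomputable def hkA (up d lo : ℕ → ℝ) : ℕ → ℕ → ℝ
  | 0, n => if n = 0 then 1 else 0
  | i+1, 0 => d 0 * hkA up d lo i 0 + lo 1 * hkA up d lo i 1
  | i+1, n+1 => up n * hkA up d lo i n + d (n+1) * hkA up d lo i (n+1) +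
      lo (n+2) * hkA up d lo i (n+2)

lemma hkA_zero (up d lo : ℕ → ℝ) (i n : ℕ) (h : i < n) : hkA up d lo i n = 0 := by
  induction i generalizing n with
  | zero => simp [hkA]; omega
  | succ i ih =>
    obtain ⟨n, rfl⟩ : ∃ k, n = k + 1 := ⟨n - 1, by omega⟩
    rw [hkA, ih n (by omega), ih (n+1) (by omega), ih (n+2) (by omega)]; simp

lemma hkA_diag (up d lo : ℕ → ℝ) (i : ℕ) : hkA up d lo i i = ∏ k ∈ range i, up k := by
  induction i with
  | zero => simp [hkA]
  | succ i ih =>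
    rw [hkA, ih, hkA_zero _ _ _ i (i+1) (by omega), hkA_zero _ _ _ i (i+2) (by omega),
      prod_range_succ]; ring

lemma hk_factor (up d lo : ℕ → ℝ) (M : ℕ → ℕ → ℝ)
    (h0 : ∀ j, M (j+1) 0 = 0)
    (hrec : ∀ j n, M (j+1) (n+1) = up n * M j (n+2) + d n * M j (n+1) + lo n * M j n)
    (N i j : ℕ) (hi : i ≤ N) :
    M (i+j+1) 1 = ∑ n ∈ range (N+1), hkA up d lo i n * M (j+1) (n+1) := by
  induction i generalizing j with
  | zero => simp [hkA]
  | succ i ih =>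
    have := ih (j+1) (by omega)
    rw [show i + 1 + j + 1 = i + (j+1) + 1 by ring, this]
    have e1 : ∀ n, hkA up d lo i n * M (j+1+1) (n+1) =
        up n * hkA up d lo i n * M (j+1) (n+2) + d n * hkA up d lo i n * M (j+1) (n+1)
         + lo n * hkA up d lo i n * M (j+1) n := by
      intro n; rw [hrec]; ring
    simp_rw [e1, sum_add_distrib]
    rw [sum_range_succ' (fun n => hkA up d lo (i+1) n * M (j+1) (n+1))]
    simp only [hkA]
    have e2 : ∀ n, (up n * hkA up d lo i n + d (n+1) * hkA up d lo i (n+1) +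
      lo (n+2) * hkA up d lo i (n+2)) * M (j+1) (n+1+1) = 
       up n * hkA up d lo i n * M (j+1) (n+2) + d (n+1) * hkA up d lo i (n+1) * M (j+1) (n+1+1)
       + lo (n+1+1) * hkA up d lo i (n+1+1) * M (j+1) (n+1+1) := by intro n; ring
    simp_rw [e2, sum_add_distrib]
    rw [sum_range_succ (fun n => up n * hkA up d lo i n * M (j+1) (n+2)),
      hkA_zero _ _ _ i N (by omega),
      sum_range_succ' (fun n => d n * hkA up d lo i n * M (j+1) (n+1)),
      sum_range_succ' (fun n => lo n * hkA up d lo i n * M (j+1) n)]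
    have e3 := sum_range_succ' (fun n => lo (n+1) * hkA up d lo i (n+1) * M (j+1) (n+1)) N
    rw [sum_range_succ, hkA_zero _ _ _ i (N+1) (by omega)] at e3
    simp only [h0] 
    rw [mul_zero, zero_mul, add_zero] at e3
    rw [e3]; ring

lemma hk_M_zero (up d lo : ℕ → ℝ) (M : ℕ → ℕ → ℝ)
    (h00 : ∀ n, M 0 (n+1) = 0)
    (hrec : ∀ j n, M (j+1) (n+1) = up n * M j (n+2) + d n * M j (n+1) + lo n * M j n)
    (j n : ℕ) (h : j < n) : M j n = 0 := by
  induction j generalizing n with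
  | zero => obtain ⟨n, rfl⟩ : ∃ k, n = k + 1 := ⟨n - 1, by omega⟩
            exact h00 n
  | succ i ih =>
    obtain ⟨n, rfl⟩ : ∃ k, n = k + 1 := ⟨n - 1, by omega⟩
    rw [hrec, ih n (by omega), ih (n+1) (by omega), ih (n+2) (by omega)]; simp

lemma hk_M_diag (up d lo : ℕ → ℝ) (M : ℕ → ℕ → ℝ)
    (h00 : ∀ n, M 0 (n+1) = 0) (h1 : M 0 0 = 1)
    (hrec : ∀ j n, M (j+1) (n+1) = up n * M j (n+2) + d n * M j (n+1) + lo n * M j n)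
    (j : ℕ) : M j j = ∏ k ∈ range j, lo k := by
  induction j with
  | zero => simp [h1]
  | succ i ih =>
    rw [hrec, hk_M_zero up d lo M h00 hrec i (i+1) (by omega),
      hk_M_zero up d lo M h00 hrec i (i+2) (by omega), ih, prod_range_succ]; ring

theorem hk_det (up d lo : ℕ → ℝ) (M : ℕ → ℕ → ℝ)
    (h0 : ∀ j, M (j+1) 0 = 0)
    (h00 : ∀ n, M 0 (n+1) = 0) (h1 : M 0 0 = 1)
    (hrec : ∀ j n, M (j+1) (n+1) = up n * M j (n+2) + d n * M j (n+1) + lo n * M j n) (m : ℕ) :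
    Matrix.det (Matrix.of fun i j : Fin m => M ((i:ℕ)+(j:ℕ)+1) 1) =
      ∏ i ∈ range m, ((∏ k ∈ range i, up k) * ∏ k ∈ range (i+1), lo k) := by
  cases m with
  | zero => simp
  | succ N =>
  have : (Matrix.of fun i j : Fin (N+1) => M ((i:ℕ)+(j:ℕ)+1) 1) =
      (Matrix.of fun i n : Fin (N+1) => hkA up d lo i n) *
      (Matrix.of fun n j : Fin (N+1) => M (j+1) (n+1)) := by
    ext i j
    rw [Matrix.mul_apply]
    simp only [Matrix.of_apply]
    rw [hk_factor up d lo M h0 hrec N i j (by omega), 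
      Finset.sum_range (fun n => hkA up d lo i n * M (j+1) (n+1))]
  rw [this, Matrix.det_mul, Matrix.det_of_isLowerTriangular, Matrix.det_of_isUpperTriangular,
    ← prod_mul_distrib, Finset.prod_range]
  · refine prod_congr rfl fun i _ => ?_
    simp only [Matrix.of_apply]
    rw [hkA_diag, hk_M_diag up d lo M h00 h1 hrec]
  · intro i j hij
    simp only [Matrix.of_apply]
    exact hk_M_zero up d lo M h00 hrec _ _ (by simpa using hij)
  · intro i j hij
    simp only [Matrix.of_apply]
    exact hkA_zero _ _ _ _ _ (by simpa using hij)


open PowerSeries in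
lemma ode_first_integral (V : PowerSeries ℝ) (a b : ℝ) (h0 : coeff 0 V = 0) (h1 : coeff 1 V = 0)
    (hode : derivative ℝ (derivative ℝ V) = 6 * V^2 + C b * V + C a) :
    (derivative ℝ V)^2 = 4 * V^3 + C b * V^2 + 2 * C a * V := by
  apply PowerSeries.derivative.ext
  · simp only [map_add, Derivation.leibniz, Derivation.leibniz_pow, smul_eq_mul, hode,
      derivative_C, nsmul_eq_mul]
    have h4 : derivative ℝ (4 : PowerSeries ℝ) = 0 := by
      exact_mod_cast Derivation.map_natCast (derivative ℝ) 4
    have h2 : derivative ℝ (2 : PowerSeries ℝ) = 0 := by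
      exact_mod_cast Derivation.map_natCast (derivative ℝ) 2
    rw [h4, h2]
    push_cast
    ring
  · have h0' : constantCoeff V = 0 := by simpa using h0
    have : constantCoeff (derivative ℝ V) = 0 := by
      rw [← coeff_zero_eq_constantCoeff_apply, coeff_derivative]; simp [h1]
    simp [this, h0']

open PowerSeries in
lemma ode_pow (V : PowerSeries ℝ) (a b : ℝ) (h0 : coeff 0 V = 0) (h1 : coeff 1 V = 0)
    (hode : derivative ℝ (derivative ℝ V) = 6 * V^2 + C b * V + C a) (n : ℕ) :
    derivative ℝ (derivative ℝ (V^(n+1))) =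
      C (2*((n:ℝ)+1)*(2*n+3)) * V^(n+2) + C (((n:ℝ)+1)^2*b) * V^(n+1)
        + C (((n:ℝ)+1)*(2*n+1)*a) * V^n := by
  have hf := ode_first_integral V a b h0 h1 hode
  have hn : derivative ℝ ((n:PowerSeries ℝ)) = 0 := by
      simp
  simp only [Derivation.leibniz, Derivation.leibniz_pow, smul_eq_mul, nsmul_eq_mul, Nat.add_sub_cancel,
    Nat.cast_add, Nat.cast_one, map_add, hn, map_one, hode, map_mul, map_natCast, map_pow, map_ofNat,
    Derivation.map_one_eq_zero]
  rcases n with _ | n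
  · simp; ring_nf; simp
  · simp only [Nat.add_sub_cancel]
    push_cast
    linear_combination (((n:PowerSeries ℝ)+1+1) * ((n:PowerSeries ℝ)+1) * V^n) * hf

open PowerSeries in
theorem ode_det (V : PowerSeries ℝ) (a b : ℝ) (h0 : coeff 0 V = 0) (h1 : coeff 1 V = 0)
    (hode : derivative ℝ (derivative ℝ V) = 6 * V^2 + C b * V + C a) (m : ℕ) :
    Matrix.det (Matrix.of fun i j : Fin m =>
      ((2*((i:ℕ)+(j:ℕ)+1)).factorial : ℝ) * coeff (2*((i:ℕ)+(j:ℕ)+1)) V) =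
      ∏ i ∈ range m, (((2*i+1).factorial : ℝ) * ((2*i+2).factorial : ℝ) * (a/2)^(i+1)) := by
  have key := hk_det (fun n => 2*((n:ℝ)+1)*(2*n+3)) (fun n => ((n:ℝ)+1)^2*b)
    (fun n => ((n:ℝ)+1)*(2*n+1)*a)
    (fun j n => ((2*j).factorial : ℝ) * coeff (2*j) (V^n)) ?_ ?_ ?_ ?_ m
  · simp only [pow_one] at key
    rw [key]
    refine prod_congr rfl fun i _ => ?_
    have e1 : ∀ i : ℕ, ∏ k ∈ range i, (2*((k:ℝ)+1)*(2*k+3)) = ((2*i+1).factorial : ℝ) := by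
      intro i
      induction i with
      | zero => simp
      | succ i ih =>
        rw [prod_range_succ, ih, show 2*(i+1)+1 = (2*i+1)+1+1 by ring, Nat.factorial_succ (2*i+1+1),
          Nat.factorial_succ (2*i+1)]
        push_cast; ring
    have e2 : ∀ i : ℕ, ∏ k ∈ range i, (((k:ℝ)+1)*(2*k+1)*a) = ((2*i).factorial : ℝ) * (a/2)^i := by
      intro i
      induction i with
      | zero => simp
      | succ i ih =>
        rw [prod_range_succ, ih, show 2*(i+1) = (2*i)+1+1 by ring, Nat.factorial_succ,
          Nat.factorial_succ (2*i)]
        push_cast; ring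
    rw [e1, e2, show 2*(i+1) = 2*i+2 by ring]
    ring
  · intro j
    simp [coeff_one]
  · intro n
    have h0' : constantCoeff V = 0 := by simpa using h0
    simp [h0']
  · simp
  · intro j n
    have h := congrArg (coeff (2*j)) (ode_pow V a b h0 h1 hode n)
    rw [coeff_derivative, coeff_derivative] at h
    simp only [map_add, coeff_C_mul] at h
    rw [show 2*(j+1) = 2*j+1+1 by ring, Nat.factorial_succ, Nat.factorial_succ (2*j)]
    push_cast at h ⊢
    linear_combination ((2*j).factorial : ℝ) * h


/-! ### Formal series -/

/-- `Z = - e^X` -/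
noncomputable def fZ : PowerSeries ℝ := - PowerSeries.exp ℝ
/-- `Z⁻¹ = - e^{-X}` -/
noncomputable def fZi : PowerSeries ℝ := - PowerSeries.rescale (-1) (PowerSeries.exp ℝ)
/-- `W = 1/(1+e^X)` -/
noncomputable def fW : PowerSeries ℝ := (1 + PowerSeries.exp ℝ)⁻¹
/-- `T = W^2 - W = Z/(1-Z)^2` -/
noncomputable def fT : PowerSeries ℝ := fW^2 - fW
/-- `C_k = (-1)^k cosh (k X)` -/
noncomputable def fC (k : ℕ) : PowerSeries ℝ := (2:ℝ)⁻¹ • (fZ^k + fZi^k)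

lemma fZ_mul : fZ * fZi = 1 := by
  have := PowerSeries.exp_mul_exp_eq_exp_add (A := ℝ) 1 (-1)
  simp at this
  simp [fZ, fZi, this]

lemma fW_mul : fW * (1 + PowerSeries.exp ℝ) = 1 := by
  apply PowerSeries.inv_mul_cancel
  simp

lemma fZ_pow (k : ℕ) : fZ^k = (-1:ℝ)^k • PowerSeries.rescale (k:ℝ) (PowerSeries.exp ℝ) := by
  rw [fZ, neg_pow, PowerSeries.exp_pow_eq_rescale_exp, Algebra.smul_def]
  simp

lemma fZi_pow (k : ℕ) : fZi^k = (-1:ℝ)^k • PowerSeries.rescale (-k:ℝ) (PowerSeries.exp ℝ) := by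
  rw [fZi, neg_pow, ← map_pow, PowerSeries.exp_pow_eq_rescale_exp, Algebra.smul_def,
    PowerSeries.rescale_rescale]
  simp

lemma coeff_fC (k j : ℕ) : PowerSeries.coeff j (fC k) =
    (-1)^k * ((k:ℝ)^j + (-k:ℝ)^j) / 2 / (j.factorial : ℝ) := by
  rw [fC, fZ_pow, fZi_pow]
  simp [PowerSeries.coeff_rescale, PowerSeries.coeff_exp]
  ring

lemma fC_zero : fC 0 = 1 := by
  rw [fC]; rw [pow_zero, pow_zero, ← two_smul ℝ, smul_smul]; norm_num

lemma fC_mul_add (l d : ℕ) : fC (l + d) * fC l = (2:ℝ)⁻¹ • (fC (l + d + l) + fC d) := by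
  have h : (fZ * fZi)^l = 1 := by rw [fZ_mul, one_pow]
  rw [mul_pow] at h
  simp only [fC, smul_mul_smul, ← smul_add, smul_smul]
  congr 1
  simp only [pow_add]
  linear_combination (fZ^d + fZi^d) * h

lemma fC_mul (k l : ℕ) : fC k * fC l = (2:ℝ)⁻¹ • (fC (k + l) + fC ((k - l) + (l - k))) := by
  rcases le_total l k with h | h
  · obtain ⟨d, rfl⟩ := Nat.exists_eq_add_of_le h
    rw [fC_mul_add]; simp
  · obtain ⟨d, rfl⟩ := Nat.exists_eq_add_of_le h
    rw [mul_comm, fC_mul_add]; simp; rw [add_comm k (k+d)]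

lemma fT_mul : fT * (fZ + fZi - 2) = 1 := by
  have h1 := fW_mul
  have h2 := fZ_mul
  have h3 : PowerSeries.exp ℝ = - fZ := by simp [fZ]
  rw [h3] at h1
  have h4 : fT = fZ * fW^2 := by
    rw [fT]; linear_combination fW * h1
  have h5 : fZ * (fZ + fZi - 2) = (1 - fZ)^2 := by linear_combination h2
  calc fT * (fZ + fZi - 2) = fW^2 * (fZ * (fZ + fZi - 2)) := by rw [h4]; ring
    _ = (fW * (1 + -fZ))^2 := by rw [h5]; ring
    _ = 1 := by rw [h1]; ring

lemma fT_deriv : PowerSeries.derivative ℝ fW = fT := by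
  have h1 := fW_mul
  have h2 : PowerSeries.derivative ℝ (fW * (1 + PowerSeries.exp ℝ)) = 0 := by
    rw [h1]; simp
  rw [Derivation.leibniz] at h2
  simp only [map_add, PowerSeries.derivative_exp, smul_eq_mul, Derivation.map_one_eq_zero, zero_add] at h2
  rw [fT]
  linear_combination (fW) * h2 + (-PowerSeries.derivative ℝ fW - fW) * h1

lemma fT_ode : PowerSeries.derivative ℝ (PowerSeries.derivative ℝ fT) = 6 * fT^2 + fT := by
  have h : PowerSeries.derivative ℝ fT = 2 * fW * fT - fT := by
    conv_lhs => rw [fT]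
    rw [map_sub, Derivation.leibniz_pow, fT_deriv]; simp; ring
  have h2 : PowerSeries.derivative ℝ (2 : PowerSeries ℝ) = 0 := by
      exact_mod_cast Derivation.map_natCast (PowerSeries.derivative ℝ) 2
  rw [h, map_sub, Derivation.leibniz, Derivation.leibniz, h, fT_deriv, h2]
  simp only [smul_eq_mul, fT]
  ring

lemma coeff_fW (n : ℕ) : PowerSeries.coeff n fW =
    (1 - 2^(n+1)) * ((bernoulli (n+1) : ℚ) : ℝ) / ((n+1).factorial : ℝ) := by
  have hB := bernoulliPowerSeries_mul_exp_sub_one ℝ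
  set B := bernoulliPowerSeries ℝ with hBdef
  have hB2 := congrArg (PowerSeries.rescale (2:ℝ)) hB
  rw [map_mul, map_sub, map_one] at hB2
  have hE : PowerSeries.rescale (2:ℝ) (PowerSeries.exp ℝ) = PowerSeries.exp ℝ ^ 2 := by
    rw [PowerSeries.exp_pow_eq_rescale_exp]; simp
  have hX : PowerSeries.rescale (2:ℝ) (PowerSeries.X) = 2 * PowerSeries.X := by
    rw [PowerSeries.rescale_X]; simp; rfl
  rw [hE, hX] at hB2
  have hne : (PowerSeries.exp ℝ - 1) ≠ 0 := by
    intro h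
    have := congrArg (PowerSeries.coeff 1) h
    simp [PowerSeries.coeff_exp, PowerSeries.coeff_one] at this
  have h3 : (B - PowerSeries.rescale 2 B) * (PowerSeries.exp ℝ + 1) = PowerSeries.X := by
    apply mul_right_cancel₀ hne
    linear_combination (PowerSeries.exp ℝ + 1) * hB - hB2
  have h4 : PowerSeries.X * fW = B - PowerSeries.rescale 2 B := by
    have h1 := fW_mul
    linear_combination (-fW) * h3 + (B - PowerSeries.rescale 2 B) * h1
  have h5 := congrArg (PowerSeries.coeff (n+1)) h4
  rw [mul_comm, PowerSeries.coeff_succ_mul_X] at h5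
  rw [h5]
  simp [hBdef, bernoulliPowerSeries, PowerSeries.coeff_rescale]
  ring

lemma coeff_fT (n : ℕ) : PowerSeries.coeff n fT =
    (1 - 2^(n+2)) * ((bernoulli (n+2) : ℚ) : ℝ) / (((n+2) * n.factorial : ℝ)) := by
  rw [← fT_deriv, PowerSeries.coeff_derivative, coeff_fW, Nat.factorial_succ, Nat.factorial_succ]
  have : (n.factorial : ℝ) ≠ 0 := by positivity
  push_cast
  field_simp
  ring

lemma coeff_one_fT : PowerSeries.coeff 1 fT = 0 := by
  rw [coeff_fT, bernoulli_eq_zero_of_odd (by decide) (by norm_num)]; simp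

lemma abs_bernoulli (n : ℕ) (hn : n ≠ 0) :
    |((bernoulli (2 * n) : ℚ) : ℝ)| = (-1)^(n+1) * ((bernoulli (2 * n) : ℚ) : ℝ) := by
  have h := hasSum_zeta_nat hn
  have h0 : 0 ≤ ((-1 : ℝ) ^ (n + 1) * (2 : ℝ) ^ (2 * n - 1) * Real.pi ^ (2 * n) *
        bernoulli (2 * n) / (2 * n).factorial) := by
    rw [← h.tsum_eq]; positivity
  have h1 : (-1 : ℝ) ^ (n + 1) * (2 : ℝ) ^ (2 * n - 1) * Real.pi ^ (2 * n) *
        bernoulli (2 * n) / (2 * n).factorial = ((2 : ℝ) ^ (2 * n - 1) * Real.pi ^ (2 * n) / (2 * n).factorial)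
          * ((-1)^(n+1) * ((bernoulli (2 * n) : ℚ) : ℝ)) := by ring
  rw [h1] at h0
  have hpos : (0:ℝ) < ((2 : ℝ) ^ (2 * n - 1) * Real.pi ^ (2 * n) / (2 * n).factorial) := by positivity
  have h2 := nonneg_of_mul_nonneg_right h0 hpos
  rw [← abs_of_nonneg h2, abs_mul]; simp

/-- Fejer-type kernel -/
noncomputable def fK (k : ℕ) : PowerSeries ℝ :=
  (2:ℝ) • (∑ j ∈ range k, ((k:ℝ) - j) • fC j) - (k:ℝ) • fC 0

lemma fK_rec (k : ℕ) : fK (k+2) = 2 * fK (k+1) - fK k + 2 * fC (k+1) := by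
  have h : ∀ k : ℕ, (∑ j ∈ range (k+1), (((k+1:ℕ):ℝ) - j) • fC j) =
    (∑ j ∈ range k, ((k:ℝ) - j) • fC j) + ∑ j ∈ range (k+1), fC j := by
    intro k
    have : (∑ j ∈ range k, ((k:ℝ) - j) • fC j) = ∑ j ∈ range (k+1), ((k:ℝ) - j) • fC j := by
      rw [sum_range_succ]; simp
    rw [this, ← sum_add_distrib]
    refine sum_congr rfl fun j _ => ?_
    push_cast; module
  simp only [fK]
  rw [h (k+1), h k, sum_range_succ _ (k+1)]
  push_cast
  simp only [two_mul]
  module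

lemma fK_eq (k : ℕ) : 2 * fT * (fC k - 1) = fK k := by
  have hC1 : fT * (2 * fC 1 - 2) = 1 := by
    have : 2 * fC 1 = fZ + fZi := by rw [fC, two_mul]; rw [pow_one, pow_one]; module
    rw [this]; exact fT_mul
  induction k using Nat.twoStepInduction with
  | zero => simp [fK, fC_zero]
  | one => simp [fK, fC_zero]; rw [show (2:PowerSeries ℝ) * fT * (fC 1 - 1) = fT * (2 * fC 1 - 2) by ring, hC1]
           rw [two_smul]; ring
  | more k ih1 ih2 =>
    have h : 2 * (fC (k+1) * fC 1) = fC (k+2) + fC k := by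
      rw [fC_mul]; simp only [Nat.add_sub_cancel, two_mul]
      have : 1 - (k+1) = 0 := by omega
      rw [this]; module
    rw [fK_rec, ← ih1, ← ih2]
    linear_combination (-2 * fT) * h + (2 * fC (k+1)) * hC1


/-! ### Lambert series -/

/-- `x_k = p^k/(1-p^k)` (with `x_0 = 0`). -/
noncomputable def lx (p : ℝ) (k : ℕ) : ℝ := p^k / (1 - p^k)

lemma lx_zero (p : ℝ) : lx p 0 = 0 := by simp [lx]

lemma lam_one_sub_ne (p : ℝ) (hp : |p| < 1) (k : ℕ) (hk : k ≠ 0) : 1 - p^k ≠ 0 := by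
  have : |p^k| < 1 := by rw [abs_pow]; exact pow_lt_one₀ (abs_nonneg _) hp hk
  have := (abs_lt.mp this).2
  linarith

lemma lx_bound (p : ℝ) (hp : |p| < 1) (k : ℕ) : |lx p k| ≤ (1 - |p|)⁻¹ * |p|^k := by
  have h1 : 0 < 1 - |p| := by linarith
  rcases Nat.eq_zero_or_pos k with rfl | hk
  · rw [lx_zero]; simp; linarith
  · rw [lx, abs_div, abs_pow, div_eq_mul_inv, mul_comm]
    gcongr
    have h2 : |p|^k ≤ |p| := by
      simpa using pow_le_pow_of_le_one (abs_nonneg p) hp.le hk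
    have h3 : p^k ≤ |p|^k := by rw [← abs_pow]; exact le_abs_self _
    have h4 := le_abs_self (1 - p^k)
    linarith

lemma lx_mul (p : ℝ) (hp : |p| < 1) (n l : ℕ) (hn : n ≠ 0) (hl : l ≠ 0) :
    lx p n * lx p l = lx p (n+l) * (1 + lx p n + lx p l) := by
  have h1 := lam_one_sub_ne p hp n hn
  have h2 := lam_one_sub_ne p hp l hl
  have h3 := lam_one_sub_ne p hp (n+l) (by omega)
  rw [pow_add] at h3
  simp only [lx, pow_add]
  field_simp
  ring

lemma summ_base (ρ : ℝ) (h0 : 0 ≤ ρ) (h1 : ρ < 1) (s : ℕ) :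
    Summable (fun k : ℕ => ((k:ℝ)+1)^s * ρ^k) := by
  have hs := summable_pow_mul_geometric_of_norm_lt_one (R := ℝ) s (r := ρ)
    (by rw [Real.norm_eq_abs, abs_of_nonneg h0]; exact h1)
  have hg := summable_geometric_of_lt_one h0 h1
  refine Summable.of_nonneg_of_le (fun k => by positivity) (fun k => ?_) ((hs.mul_left (2^s)).add hg)
  rcases Nat.eq_zero_or_pos k with rfl | hk
  · simp
  · have hk' : (1:ℝ) ≤ k := by exact_mod_cast hk
    have : ((k:ℝ)+1)^s ≤ 2^s * (k:ℝ)^s := by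
      rw [← mul_pow]; gcongr; linarith
    have h3 : 0 ≤ ρ^k := by positivity
    nlinarith [mul_le_mul_of_nonneg_right this h3]

lemma summ_of_bound (ρ : ℝ) (h0 : 0 ≤ ρ) (h1 : ρ < 1) (s : ℕ) (K : ℝ) (f : ℕ → ℝ)
    (hf : ∀ k : ℕ, |f k| ≤ K * (((k:ℝ)+1)^s * ρ^k)) : Summable f :=
  Summable.of_norm_bounded ((summ_base ρ h0 h1 s).mul_left K) hf

lemma summ_of_bound2 (ρ : ℝ) (h0 : 0 ≤ ρ) (h1 : ρ < 1) (s t : ℕ) (K : ℝ) (f : ℕ × ℕ → ℝ)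
    (hf : ∀ a b : ℕ, |f (a, b)| ≤ K * ((((a:ℝ)+1)^s * ρ^a) * (((b:ℝ)+1)^t * ρ^b))) : Summable f := by
  have := (summ_base ρ h0 h1 s).mul_of_nonneg (summ_base ρ h0 h1 t)
    (fun k => by positivity) (fun k => by positivity)
  exact Summable.of_norm_bounded (this.mul_left K) (fun ⟨a, b⟩ => hf a b)

/-- `e_k = k x_k` -/
noncomputable def le1 (p : ℝ) (k : ℕ) : ℝ := k * lx p k

lemma le1_bound (p : ℝ) (hp : |p| < 1) (k : ℕ) :
    |le1 p k| ≤ (1 - |p|)⁻¹ * (((k:ℝ)+1) * |p|^k) := by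
  have h1 : 0 < 1 - |p| := by linarith
  rw [le1, abs_mul, Nat.abs_cast]
  calc (k:ℝ) * |lx p k| ≤ ((k:ℝ)+1) * ((1 - |p|)⁻¹ * |p|^k) := by
        gcongr
        · linarith
        · exact lx_bound p hp k
    _ = _ := by ring

lemma summ_lam (p : ℝ) (hp : |p| < 1) (B : ℝ) (r : ℕ) (c : ℕ → ℝ)
    (hc : ∀ k : ℕ, |c k| ≤ B * ((k:ℝ)+1)^r) : Summable (fun k => lx p k * c k) := by
  have h1 : 0 < 1 - |p| := by linarith
  refine summ_of_bound |p| (abs_nonneg _) hp r ((1-|p|)⁻¹ * B) _ fun k => ?_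
  rw [abs_mul]
  calc |lx p k| * |c k| ≤ ((1 - |p|)⁻¹ * |p|^k) * (B * ((k:ℝ)+1)^r) := by
        gcongr
        · exact lx_bound p hp k
        · exact hc k
    _ = _ := by ring

lemma summ_lam_pow (p : ℝ) (hp : |p| < 1) (r : ℕ) : Summable (fun k : ℕ => lx p k * (k:ℝ)^r) := by
  refine summ_lam p hp 1 r _ fun k => ?_
  rw [abs_of_nonneg (by positivity), one_mul]
  gcongr; linarith

lemma lam_B_nonneg (B : ℝ) (r : ℕ) (c : ℕ → ℝ)
    (hc : ∀ k : ℕ, |c k| ≤ B * ((k:ℝ)+1)^r) : 0 ≤ B := by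
  have := hc 0
  simp at this
  exact (abs_nonneg _).trans this

lemma summ_f1 (p : ℝ) (hp : |p| < 1) (B : ℝ) (r : ℕ) (c : ℕ → ℝ)
    (hc : ∀ k : ℕ, |c k| ≤ B * ((k:ℝ)+1)^r) : Summable (fun a : ℕ × ℕ => (a.2:ℝ) * le1 p (a.1+a.2) * c a.1) := by
  have h1 : 0 < 1 - |p| := by linarith
  have hB := lam_B_nonneg B r c hc
  refine summ_of_bound2 |p| (abs_nonneg _) hp (r+1) 2 ((1-|p|)⁻¹ * B) _ fun j l => ?_
  simp only [abs_mul, Nat.abs_cast]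
  calc (l:ℝ) * |le1 p (j+l)| * |c j| ≤ ((l:ℝ)+1) * ((1 - |p|)⁻¹ * ((((j:ℝ)+1)*((l:ℝ)+1)) * |p|^(j+l))) *
        (B * ((j:ℝ)+1)^r) := by
        gcongr
        · linarith
        · refine (le1_bound p hp (j+l)).trans ?_
          gcongr
          push_cast
          nlinarith [Nat.cast_nonneg (α := ℝ) j, Nat.cast_nonneg (α := ℝ) l, mul_nonneg (Nat.cast_nonneg (α := ℝ) j) (Nat.cast_nonneg (α := ℝ) l)]
        · exact hc j
    _ = _ := by rw [pow_add]; ring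

lemma summ_f23 (p : ℝ) (hp : |p| < 1) (B : ℝ) (r : ℕ) (c : ℕ → ℝ)
    (hc : ∀ k : ℕ, |c k| ≤ B * ((k:ℝ)+1)^r)
    (d : ℕ → ℕ → ℕ) (hd : ∀ k l, d k l ≤ k + l) :
    Summable (fun a : ℕ × ℕ => le1 p a.1 * le1 p a.2 * c (d a.1 a.2)) := by
  have h1 : 0 < 1 - |p| := by linarith
  have hB := lam_B_nonneg B r c hc
  refine summ_of_bound2 |p| (abs_nonneg _) hp (r+1) (r+1) ((1-|p|)⁻¹^2 * B) _ fun j l => ?_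
  simp only [abs_mul]
  calc |le1 p j| * |le1 p l| * |c (d j l)| ≤ ((1 - |p|)⁻¹ * (((j:ℝ)+1) * |p|^j)) *
        ((1 - |p|)⁻¹ * (((l:ℝ)+1) * |p|^l)) * (B * (((j:ℝ)+1)*((l:ℝ)+1))^r) := by
        gcongr
        · exact le1_bound p hp j
        · exact le1_bound p hp l
        · refine (hc _).trans ?_
          gcongr
          have : ((d j l : ℕ):ℝ) ≤ j + l := by exact_mod_cast hd j l
          nlinarith [mul_nonneg (Nat.cast_nonneg (α := ℝ) j) (Nat.cast_nonneg (α := ℝ) l)]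
    _ = _ := by rw [mul_pow]; ring

lemma tsum_antidiag (f : ℕ × ℕ → ℝ) (hf : Summable f) :
    Summable (fun n => ∑ a ∈ antidiagonal n, f a) ∧ ∑' a, f a = ∑' n, ∑ a ∈ antidiagonal n, f a := by
  have h1 : Summable (f ∘ Finset.HasAntidiagonal.sigmaAntidiagonalEquivProd (A := ℕ)) :=
    (Equiv.summable_iff _).mpr hf
  have h2 := h1.sigma
  have e : ∀ n : ℕ, ∑' (c : {x // x ∈ antidiagonal n}), (f ∘ Finset.HasAntidiagonal.sigmaAntidiagonalEquivProd (A := ℕ)) ⟨n, c⟩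
      = ∑ a ∈ antidiagonal n, f a := by
    intro n
    rw [← Finset.tsum_subtype (antidiagonal n) f]
    rfl
  constructor
  · exact (summable_congr e).mp h2
  · rw [← Equiv.tsum_eq (Finset.HasAntidiagonal.sigmaAntidiagonalEquivProd (A := ℕ)) f]
    rw [← tsum_congr e]
    exact h1.tsum_sigma


lemma lam_step1 (p : ℝ) (hp : |p| < 1) (B : ℝ) (r : ℕ) (c : ℕ → ℝ)
    (hc : ∀ k : ℕ, |c k| ≤ B * ((k:ℝ)+1)^r) :
    Summable (fun k : ℕ => le1 p k * (2 * (∑ j ∈ range k, ((k:ℝ) - j) * c j) - k * c 0)) ∧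
    ∑' k, le1 p k * (2 * (∑ j ∈ range k, ((k:ℝ) - j) * c j) - k * c 0) =
      2 * (∑' a : ℕ × ℕ, (a.2:ℝ) * le1 p (a.1+a.2) * c a.1) - c 0 * ∑' k : ℕ, k * le1 p k := by
  obtain ⟨hs, he⟩ := tsum_antidiag _ (summ_f1 p hp B r c hc)
  have e : ∀ k : ℕ, ∑ a ∈ antidiagonal k, (a.2:ℝ) * le1 p (a.1+a.2) * c a.1 =
      le1 p k * ∑ j ∈ range k, ((k:ℝ) - j) * c j := by
    intro k
    rw [Finset.Nat.sum_antidiagonal_eq_sum_range_succ (fun i j => (j:ℝ) * le1 p (i+j) * c i) k,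
      sum_range_succ]
    simp only [Nat.sub_self, Nat.cast_zero, zero_mul, add_zero]
    rw [mul_sum]
    refine sum_congr rfl fun j hj => ?_
    have hj' : j ≤ k := (mem_range.mp hj).le
    rw [Nat.cast_sub hj', Nat.add_sub_cancel' hj']
    ring
  have hs2 : Summable (fun k : ℕ => (k:ℝ) * le1 p k) := by
    refine (summ_lam_pow p hp 2).congr fun k => ?_
    rw [le1]; ring
  rw [summable_congr e] at hs
  rw [tsum_congr e] at he
  have e2 : ∀ k : ℕ, le1 p k * (2 * (∑ j ∈ range k, ((k:ℝ) - j) * c j) - k * c 0) =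
    2 * (le1 p k * ∑ j ∈ range k, ((k:ℝ) - j) * c j) - c 0 * (k * le1 p k) := by
    intro k; ring
  refine ⟨?_, ?_⟩
  · rw [summable_congr e2]
    exact (hs.mul_left 2).sub (hs2.mul_left _)
  · rw [tsum_congr e2, Summable.tsum_sub (hs.mul_left 2) (hs2.mul_left _), tsum_mul_left, tsum_mul_left, he]

lemma lam_step2 (p : ℝ) (hp : |p| < 1) (B : ℝ) (r : ℕ) (c : ℕ → ℝ)
    (hc : ∀ k : ℕ, |c k| ≤ B * ((k:ℝ)+1)^r) :
    Summable (fun a : ℕ × ℕ => le1 p a.2 * le1 p (a.1 + a.2) * c a.1) ∧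
    ∑' a : ℕ × ℕ, le1 p a.1 * le1 p a.2 * c ((a.1 - a.2) + (a.2 - a.1)) =
      2 * (∑' a : ℕ × ℕ, le1 p a.2 * le1 p (a.1 + a.2) * c a.1)
        - c 0 * ∑' k : ℕ, le1 p k ^ 2 := by
  set f : ℕ × ℕ → ℝ := fun a => le1 p a.1 * le1 p a.2 * c ((a.1 - a.2) + (a.2 - a.1)) with hf
  have hs : Summable f := summ_f23 p hp B r c hc (fun k l => (k - l) + (l - k)) (by intros; omega)
  let g : ℕ × ℕ → ℕ × ℕ := fun a => (a.1 + a.2, a.2)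
  have hg : Function.Injective g := by
    rintro ⟨a, b⟩ ⟨c, d⟩ h
    simp only [g, Prod.mk.injEq] at h
    ext <;> simp <;> omega
  have hgi : ∀ a, f (g a) = le1 p a.2 * le1 p (a.1 + a.2) * c a.1 := by
    intro a
    simp only [f, g]
    have : a.1 + a.2 - a.2 + (a.2 - (a.1 + a.2)) = a.1 := by omega
    rw [this]; ring
  let d : ℕ → ℕ × ℕ := fun k => (k, k)
  have hd : Function.Injective d := by
    intro a b h
    simp only [d, Prod.mk.injEq] at h
    exact h.1
  have hs2 := hs.comp_injective hg
  have e1 : ∑' a, Set.indicator {a : ℕ × ℕ | a.2 ≤ a.1} f a = ∑' a, f (g a) := by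
    rw [← hg.tsum_eq (f := Set.indicator {a : ℕ × ℕ | a.2 ≤ a.1} f)]
    · refine tsum_congr fun a => ?_
      rw [Set.indicator_of_mem]; simp [g]
    · intro a ha
      have : a.2 ≤ a.1 := by
        by_contra h
        exact ha (Set.indicator_of_notMem (s := {a : ℕ × ℕ | a.2 ≤ a.1}) (a := a) h f)
      exact ⟨(a.1 - a.2, a.2), by simp only [g]; ext <;> simp; omega⟩
  have e2 : ∑' a, Set.indicator {a : ℕ × ℕ | a.1 ≤ a.2} f a = ∑' a, f (g a) := by
    rw [← e1, ← Equiv.tsum_eq (Equiv.prodComm ℕ ℕ)]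
    refine tsum_congr fun a => ?_
    by_cases h : a.2 ≤ a.1
    · have h' : (Equiv.prodComm ℕ ℕ a) ∈ {a : ℕ × ℕ | a.1 ≤ a.2} := h
      have h'' : a ∈ {a : ℕ × ℕ | a.2 ≤ a.1} := h
      rw [Set.indicator_of_mem h', Set.indicator_of_mem h'']
      simp only [f, Equiv.prodComm_apply, Prod.fst_swap, Prod.snd_swap]
      rw [add_comm (a.2 - a.1)]; ring
    · have h' : (Equiv.prodComm ℕ ℕ a) ∉ {a : ℕ × ℕ | a.1 ≤ a.2} := h
      have h'' : a ∉ {a : ℕ × ℕ | a.2 ≤ a.1} := h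
      rw [Set.indicator_of_notMem h', Set.indicator_of_notMem h'']
  have e3 : ∑' a, Set.indicator {a : ℕ × ℕ | a.1 = a.2} f a = ∑' k, f (d k) := by
    rw [← hd.tsum_eq (f := Set.indicator {a : ℕ × ℕ | a.1 = a.2} f)]
    · refine tsum_congr fun a => ?_
      rw [Set.indicator_of_mem]; simp [d]
    · intro a ha
      have : a.1 = a.2 := by
        by_contra h
        exact ha (Set.indicator_of_notMem (s := {a : ℕ × ℕ | a.1 = a.2}) (a := a) h f)
      exact ⟨a.1, by simp only [d]; ext <;> simp; omega⟩
  have e4 : ∀ a, f a = Set.indicator {a : ℕ × ℕ | a.2 ≤ a.1} f a + Set.indicator {a : ℕ × ℕ | a.1 ≤ a.2} f a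
      - Set.indicator {a : ℕ × ℕ | a.1 = a.2} f a := by
    intro a
    simp only [Set.indicator, Set.mem_ofPred_eq]
    rcases lt_trichotomy a.1 a.2 with h | h | h
    · rw [if_neg (by omega), if_pos (by omega), if_neg (by omega)]; ring
    · rw [if_pos (by omega), if_pos (by omega), if_pos (by omega)]; ring
    · rw [if_pos (by omega), if_neg (by omega), if_neg (by omega)]; ring
  refine ⟨hs2.congr fun a => hgi a, ?_⟩
  rw [tsum_congr e4, Summable.tsum_sub ((hs.indicator _).add (hs.indicator _)) (hs.indicator _),
    Summable.tsum_add (hs.indicator _) (hs.indicator _), e1, e2, e3, tsum_congr hgi, ← tsum_mul_left (a := c 0)]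
  have : ∀ k, f (d k) = c 0 * le1 p k ^2 := by
    intro k; simp only [f, d, Nat.sub_self, add_zero]; ring
  rw [tsum_congr this]; ring

lemma lam_step3 (p : ℝ) (hp : |p| < 1) (B : ℝ) (r : ℕ) (c : ℕ → ℝ)
    (hc : ∀ k : ℕ, |c k| ≤ B * ((k:ℝ)+1)^r) :
    Summable (fun n : ℕ => c n * ∑ a ∈ antidiagonal n, le1 p a.1 * le1 p a.2) ∧
    ∑' a : ℕ × ℕ, le1 p a.1 * le1 p a.2 * c (a.1 + a.2) =
      ∑' n : ℕ, c n * ∑ a ∈ antidiagonal n, le1 p a.1 * le1 p a.2 := by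
  obtain ⟨hs, he⟩ := tsum_antidiag _ (summ_f23 p hp B r c hc (fun k l => k + l) (fun _ _ => le_rfl))
  have e : ∀ k : ℕ, ∑ a ∈ antidiagonal k, le1 p a.1 * le1 p a.2 * c (a.1 + a.2) =
      c k * ∑ a ∈ antidiagonal k, le1 p a.1 * le1 p a.2 := by
    intro k
    rw [mul_sum]
    refine sum_congr rfl fun a ha => ?_
    rw [mem_antidiagonal.mp ha]; ring
  rw [summable_congr e] at hs
  rw [tsum_congr e] at he
  exact ⟨hs, he⟩

/-- `B_n` -/
noncomputable def lB (p : ℝ) (n : ℕ) : ℝ := ∑ k ∈ range (n+1), (k:ℝ) * (n - k) * lx p k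

lemma lam_A (p : ℝ) (hp : |p| < 1) (n : ℕ) :
    ∑ a ∈ antidiagonal n, le1 p a.1 * le1 p a.2 =
      lx p n * ((n:ℝ) * (n^2 - 1) / 6 + 2 * lB p n) := by
  have e : ∀ a ∈ antidiagonal n, le1 p a.1 * le1 p a.2 =
      lx p n * (((a.1:ℝ) * a.2) + (a.1:ℝ) * a.2 * lx p a.1 + (a.2:ℝ) * a.1 * lx p a.2) := by
    intro a ha
    have ha' := mem_antidiagonal.mp ha
    simp only [le1]
    rcases Nat.eq_zero_or_pos a.1 with h1 | h1
    · simp [h1]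
    rcases Nat.eq_zero_or_pos a.2 with h2 | h2
    · simp [h2]
    have := lx_mul p hp a.1 a.2 (by omega) (by omega)
    rw [ha'] at this
    linear_combination ((a.1:ℝ) * a.2) * this
  rw [sum_congr rfl e, ← mul_sum, sum_add_distrib, sum_add_distrib]
  have hB : ∑ a ∈ antidiagonal n, (a.1:ℝ) * a.2 * lx p a.1 = lB p n := by
    rw [Finset.Nat.sum_antidiagonal_eq_sum_range_succ (fun i j => (i:ℝ) * j * lx p i) n, lB]
    refine sum_congr rfl fun j hj => ?_
    have hj' : j ≤ n := by have := mem_range.mp hj; omega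
    rw [Nat.cast_sub hj']
  have hB2 : ∑ a ∈ antidiagonal n, (a.2:ℝ) * a.1 * lx p a.2 = lB p n := by
    rw [← hB, ← Finset.Nat.sum_antidiagonal_swap]
    rfl
  have hC : ∑ a ∈ antidiagonal n, (a.1:ℝ) * a.2 = (n:ℝ) * (n^2 - 1) / 6 := by
    rw [Finset.Nat.sum_antidiagonal_eq_sum_range_succ (fun i j => (i:ℝ) * j) n]
    have : ∀ m : ℕ, ∀ x : ℝ, ∑ k ∈ range (m+1), (k:ℝ) * (x - k) = m * (m+1) / 2 * x - m * (m+1) * (2*m+1) / 6 := by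
      intro m x
      induction m with
      | zero => simp
      | succ m ih => rw [sum_range_succ, ih]; push_cast; ring
    rw [sum_congr rfl (g := fun k : ℕ => (k:ℝ) * ((n:ℝ) - k))]
    · rw [this]; ring
    · intro j hj
      have hj' : j ≤ n := by have := mem_range.mp hj; omega
      rw [Nat.cast_sub hj']
  rw [hB, hB2, hC]; ring

lemma lam_I (p : ℝ) (hp : |p| < 1) (n : ℕ) (hn : n ≠ 0) :
    ∑' l : ℕ, ((l:ℝ) * le1 p (n+l) + le1 p l * le1 p (n+l)) =
      lx p n * (2 * n * (∑' k, le1 p k) - lB p n) := by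
  have h1 : Summable (fun k : ℕ => (k:ℝ) * lx p k) := by
    refine (summ_lam_pow p hp 1).congr fun k => ?_
    ring
  have h2 : Summable (fun k : ℕ => (k:ℝ)^2 * lx p k) := by
    refine (summ_lam_pow p hp 2).congr fun k => ?_
    ring
  have h3 : Summable (fun k : ℕ => (k:ℝ) * (k - n) * lx p k) := by
    refine (h2.sub (h1.mul_left (n:ℝ))).congr fun k => ?_
    ring
  have h4 := h3.sum_add_tsum_nat_add n
  have h3' := (summable_nat_add_iff n).mpr h3
  have e5 : ∑' k : ℕ, (k:ℝ) * (k - n) * lx p k = ∑' k : ℕ, (k:ℝ)^2 * lx p k - n * ∑' k : ℕ, (k:ℝ) * lx p k := by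
    rw [← tsum_mul_left, ← Summable.tsum_sub h2 (h1.mul_left _)]
    refine tsum_congr fun k => ?_
    ring
  have e6 : ∑ k ∈ range n, (k:ℝ) * (k - n) * lx p k = - lB p n := by
    rw [lB, sum_range_succ, sub_self, mul_zero, zero_mul, add_zero, ← sum_neg_distrib]
    refine sum_congr rfl fun k _ => ?_
    ring
  have e7 : ∀ l : ℕ, ((l:ℝ) * le1 p (n+l) + le1 p l * le1 p (n+l)) =
     lx p n * ((l:ℝ)^2 * lx p l + n * (l * lx p l) - ((l+n : ℕ):ℝ) * ((l+n:ℕ) - n) * lx p (l+n)) := by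
    intro l
    rw [add_comm l n]
    rcases Nat.eq_zero_or_pos l with rfl | hl
    · simp [le1]
    · have := lx_mul p hp n l hn (by omega)
      simp only [le1]
      push_cast
      linear_combination (-(l:ℝ) * (n + l)) * this
  rw [tsum_congr e7, tsum_mul_left, Summable.tsum_sub (h2.add (h1.mul_left _)) h3',
    Summable.tsum_add h2 (h1.mul_left _), tsum_mul_left]
  have e8 : ∑' k, le1 p k = ∑' k : ℕ, (k:ℝ) * lx p k := rfl
  rw [e8]
  rw [e5, e6] at h4
  linear_combination (- lx p n) * h4

theorem lam_key (p : ℝ) (hp : |p| < 1) (B : ℝ) (r : ℕ) (c : ℕ → ℝ)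
    (hc : ∀ k : ℕ, |c k| ≤ B * ((k:ℝ)+1)^r) :
    2 * (1 - 24 * ∑' k, le1 p k) * (∑' k, le1 p k * c k) 
      - 12 * (∑' k : ℕ, (k * le1 p k + le1 p k ^2)) * c 0 =
    2 * (∑' k : ℕ, (k:ℝ)^2 * le1 p k * c k)
     - 12 * ∑' k : ℕ, le1 p k * (2 * (∑ j ∈ range k, ((k:ℝ) - j) * c j) - k * c 0)
     - 12 * ∑' a : ℕ × ℕ, le1 p a.1 * le1 p a.2 * (c (a.1 + a.2) + c ((a.1 - a.2) + (a.2 - a.1))) := by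
  have hB := lam_B_nonneg B r c hc
  obtain ⟨-, s1⟩ := lam_step1 p hp B r c hc
  obtain ⟨s2s, s2⟩ := lam_step2 p hp B r c hc
  obtain ⟨s3s, s3⟩ := lam_step3 p hp B r c hc
  have s1s := summ_f1 p hp B r c hc
  rw [s1]
  have e1 : ∑' a : ℕ × ℕ, le1 p a.1 * le1 p a.2 * (c (a.1 + a.2) + c ((a.1 - a.2) + (a.2 - a.1))) =
    ∑' a : ℕ × ℕ, le1 p a.1 * le1 p a.2 * c (a.1 + a.2) +
    ∑' a : ℕ × ℕ, le1 p a.1 * le1 p a.2 * c ((a.1 - a.2) + (a.2 - a.1)) := by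
    rw [← Summable.tsum_add (summ_f23 p hp B r c hc (fun k l => k + l) (fun _ _ => le_rfl)) 
      (summ_f23 p hp B r c hc (fun k l => (k - l) + (l - k)) (by intros; omega))]
    refine tsum_congr fun a => ?_
    ring
  rw [e1, s2, s3]
  have hG1 : Summable (fun k : ℕ => (k:ℝ) * le1 p k) := by
    refine (summ_lam_pow p hp 2).congr fun k => ?_
    rw [le1]; ring
  have hG2 : Summable (fun k : ℕ => le1 p k ^2) := by
    refine (summ_lam p hp ((1-|p|)⁻¹) 2 (fun k => (k:ℝ)^2 * lx p k) fun k => ?_).congr fun k => ?_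
    · rw [abs_mul, abs_of_nonneg (by positivity : (0:ℝ) ≤ (k:ℝ)^2), mul_comm]
      have h1 : 0 < 1 - |p| := by linarith
      gcongr
      · refine (lx_bound p hp k).trans ?_
        refine mul_le_of_le_one_right (by positivity) (pow_le_one₀ (abs_nonneg _) hp.le)
      · linarith
    · rw [le1]; ring
  -- combine the two double sums
  have e2 : ∑' a : ℕ × ℕ, (a.2:ℝ) * le1 p (a.1+a.2) * c a.1 + ∑' a : ℕ × ℕ, le1 p a.2 * le1 p (a.1 + a.2) * c a.1
     = ∑' n : ℕ, c n * ∑' l : ℕ, ((l:ℝ) * le1 p (n+l) + le1 p l * le1 p (n+l)) := by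
    rw [← Summable.tsum_add s1s s2s, Summable.tsum_prod (s1s.add s2s)]
    refine tsum_congr fun n => ?_
    rw [← tsum_mul_left]
    refine tsum_congr fun l => ?_
    simp only []; ring
  have e2s : Summable fun n : ℕ => c n * ∑' l : ℕ, ((l:ℝ) * le1 p (n+l) + le1 p l * le1 p (n+l)) := by
    refine (s1s.add s2s).prod.congr fun n => ?_
    rw [← tsum_mul_left]
    refine tsum_congr fun l => ?_
    simp only []; ring
  have hcc : ∀ m : ℕ, Summable fun k : ℕ => (k:ℝ)^m * le1 p k * c k := by
    intro m
    refine (summ_lam p hp B (m+1+r) (fun k => (k:ℝ)^(m+1) * c k) fun k => ?_).congr fun k => ?_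
    · rw [abs_mul, abs_of_nonneg (by positivity : (0:ℝ) ≤ (k:ℝ)^(m+1)), pow_add _ (m+1)]
      calc (k:ℝ)^(m+1) * |c k| ≤ ((k:ℝ)+1)^(m+1) * (B * ((k:ℝ)+1)^r) := by
            gcongr
            · linarith
            · exact hc k
        _ = _ := by ring
    · rw [le1]; ring
  have h0 := hcc 0
  simp only [pow_zero, one_mul] at h0
  have h2 := hcc 2
  set G := ∑' k, le1 p k with hG
  have fin : ∑' n : ℕ, (2 * ((n:ℝ)^2 * le1 p n * c n) 
      - 24 * (c n * ∑' l : ℕ, ((l:ℝ) * le1 p (n+l) + le1 p l * le1 p (n+l)))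
      - 12 * (c n * ∑ a ∈ antidiagonal n, le1 p a.1 * le1 p a.2)
      - 2 * (1 - 24 * G) * (le1 p n * c n)) = - 24 * c 0 * (∑' k : ℕ, (k * le1 p k + le1 p k ^2)) := by
    rw [tsum_eq_single 0]
    · simp [le1]
      rw [mul_assoc]
      congr 2
      exact tsum_congr fun k => by ring
    · intro n hn
      rw [lam_I p hp n hn, lam_A p hp n, le1]
      ring
  rw [Summable.tsum_sub ((((h2.mul_left 2).sub (e2s.mul_left 24)).sub (s3s.mul_left 12))) (h0.mul_left _),
    Summable.tsum_sub (((h2.mul_left 2).sub (e2s.mul_left 24))) (s3s.mul_left 12),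
    Summable.tsum_sub (h2.mul_left 2) (e2s.mul_left 24), tsum_mul_left, tsum_mul_left, tsum_mul_left,
    tsum_mul_left, ← e2] at fin
  rw [Summable.tsum_add hG1 hG2] at fin ⊢
  linear_combination -fin


lemma abs_coeff_fC (k j : ℕ) : |PowerSeries.coeff j (fC k)| ≤ 1 * ((k:ℝ)+1)^j := by
  rw [coeff_fC]
  have hk : (0:ℝ) ≤ k := by positivity
  have h1 : |(k:ℝ)^j + (-k:ℝ)^j| ≤ 2 * ((k:ℝ)+1)^j := by
    refine (abs_add_le _ _).trans ?_
    rw [abs_pow, abs_pow, abs_neg, abs_of_nonneg hk]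
    have : (k:ℝ)^j ≤ ((k:ℝ)+1)^j := by gcongr; linarith
    linarith
  have hf : (1:ℝ) ≤ (j.factorial : ℝ) := by exact_mod_cast Nat.one_le_iff_ne_zero.mpr (Nat.factorial_ne_zero j)
  rw [abs_div, abs_div, abs_mul, abs_pow, abs_neg, abs_one, one_pow, one_mul, abs_two, Nat.abs_cast, one_mul]
  rw [div_le_iff₀ (by linarith)]
  have : (0:ℝ) ≤ ((k:ℝ)+1)^j := by positivity
  nlinarith

/-- Lambert power series -/
noncomputable def fL (p : ℝ) : PowerSeries ℝ :=
  PowerSeries.mk fun j => ∑' k, le1 p k * PowerSeries.coeff j (fC k)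

lemma summ_fC (p : ℝ) (hp : |p| < 1) (j : ℕ) :
    Summable fun k => le1 p k * PowerSeries.coeff j (fC k) := by
  refine (summ_lam p hp 1 (j+1) (fun k => k * PowerSeries.coeff j (fC k)) fun k => ?_).congr fun k => ?_
  · rw [abs_mul, Nat.abs_cast, pow_succ]
    have := abs_coeff_fC k j
    calc (k:ℝ) * |PowerSeries.coeff j (fC k)| ≤ ((k:ℝ)+1) * (1 * ((k:ℝ)+1)^j) := by
          gcongr; linarith
      _ = _ := by ring
  · rw [le1]; ring

lemma coeff_mul_fL (p : ℝ) (hp : |p| < 1) (F : PowerSeries ℝ) (n : ℕ) :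
    Summable (fun k => le1 p k * PowerSeries.coeff n (F * fC k)) ∧
    PowerSeries.coeff n (F * fL p) = ∑' k, le1 p k * PowerSeries.coeff n (F * fC k) := by
  have e : ∀ k, le1 p k * PowerSeries.coeff n (F * fC k) =
      ∑ a ∈ antidiagonal n, PowerSeries.coeff a.1 F * (le1 p k * PowerSeries.coeff a.2 (fC k)) := by
    intro k
    rw [PowerSeries.coeff_mul, mul_sum]
    exact sum_congr rfl fun a _ => by ring
  refine ⟨?_, ?_⟩
  · rw [summable_congr e]
    exact summable_sum fun a _ => (summ_fC p hp a.2).mul_left _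
  · have hs : ∀ a ∈ antidiagonal n, Summable fun k => PowerSeries.coeff a.1 F * (le1 p k * PowerSeries.coeff a.2 (fC k)) :=
      fun a _ => (summ_fC p hp a.2).mul_left _
    rw [tsum_congr e, Summable.tsum_finsetSum hs, PowerSeries.coeff_mul]
    refine sum_congr rfl fun a _ => ?_
    rw [tsum_mul_left, fL, PowerSeries.coeff_mk]

lemma coeff_D2_fC (k n : ℕ) : PowerSeries.coeff (n+1+1) (fC k) * ((n+1:ℕ)+1) * (n+1) =
    (k:ℝ)^2 * PowerSeries.coeff n (fC k) := by
  rw [coeff_fC, coeff_fC, Nat.factorial_succ, Nat.factorial_succ]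
  have : (n.factorial : ℝ) ≠ 0 := by exact_mod_cast Nat.factorial_ne_zero n
  push_cast
  field_simp
  ring

lemma coeff_D2_fL (p : ℝ) (n : ℕ) :
    PowerSeries.coeff n (PowerSeries.derivative ℝ (PowerSeries.derivative ℝ (fL p))) =
     ∑' k : ℕ, (k:ℝ)^2 * le1 p k * PowerSeries.coeff n (fC k) := by
  rw [PowerSeries.coeff_derivative, PowerSeries.coeff_derivative, fL, PowerSeries.coeff_mk,
    ← tsum_mul_right, ← tsum_mul_right]
  refine tsum_congr fun k => ?_
  have := coeff_D2_fC k n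
  linear_combination le1 p k * this

lemma coeff_fL_sq (p : ℝ) (hp : |p| < 1) (n : ℕ) :
    PowerSeries.coeff n (fL p * fL p) = (2:ℝ)⁻¹ * 
      ∑' a : ℕ × ℕ, le1 p a.1 * le1 p a.2 * (PowerSeries.coeff n (fC (a.1 + a.2)) 
        + PowerSeries.coeff n (fC ((a.1 - a.2) + (a.2 - a.1)))) := by
  have hs : Summable fun a : ℕ × ℕ => le1 p a.1 * le1 p a.2 * (PowerSeries.coeff n (fC (a.1 + a.2)) 
        + PowerSeries.coeff n (fC ((a.1 - a.2) + (a.2 - a.1)))) := by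
    refine ((summ_f23 p hp 1 n (fun k => PowerSeries.coeff n (fC k)) (fun k => abs_coeff_fC k n) (fun k l => k + l) (fun _ _ => le_rfl)).add
      (summ_f23 p hp 1 n (fun k => PowerSeries.coeff n (fC k)) (fun k => abs_coeff_fC k n) (fun k l => (k - l) + (l - k)) (by intros; omega))).congr fun a => ?_
    ring
  rw [(coeff_mul_fL p hp (fL p) n).2, Summable.tsum_prod hs, ← tsum_mul_left]
  refine tsum_congr fun k => ?_
  rw [mul_comm (fL p), (coeff_mul_fL p hp (fC k) n).2, ← tsum_mul_left, ← tsum_mul_left]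
  refine tsum_congr fun l => ?_
  rw [fC_mul]
  simp only [PowerSeries.coeff_smul, map_add, smul_eq_mul]
  ring

/-- the function `P` -/
noncomputable def fP (p : ℝ) : PowerSeries ℝ := fT + 2 * fL p

lemma coeff_fK (k n : ℕ) : PowerSeries.coeff n (fK k) = 
    2 * (∑ j ∈ range k, ((k:ℝ) - j) * PowerSeries.coeff n (fC j)) - k * PowerSeries.coeff n (fC 0) := by
  rw [fK]
  simp [map_sub, map_sum]

lemma coeff_TL (p : ℝ) (hp : |p| < 1) (n : ℕ) :
    PowerSeries.coeff n (2 * fT * fL p) - (∑' k, le1 p k) * PowerSeries.coeff n (2 * fT) =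
    ∑' k : ℕ, le1 p k * (2 * (∑ j ∈ range k, ((k:ℝ) - j) * PowerSeries.coeff n (fC j)) - k * PowerSeries.coeff n (fC 0)) := by
  have hs : Summable (le1 p) := by
    refine (summ_lam_pow p hp 1).congr fun k => ?_
    rw [le1]; ring
  obtain ⟨h1, h2⟩ := coeff_mul_fL p hp (2 * fT) n
  rw [h2, ← tsum_mul_right, ← Summable.tsum_sub h1 (hs.mul_right _)]
  refine tsum_congr fun k => ?_
  rw [← coeff_fK, ← fK_eq, mul_sub, map_sub, mul_one]
  ring

/-- The constant `γ`. -/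
noncomputable def lgam (p : ℝ) : ℝ := - 12 * (∑' k : ℕ, (k * le1 p k + le1 p k ^2))

lemma lgam_eq (p : ℝ) (hp : |p| < 1) : lgam p = -10 * (∑' k : ℕ, lx p k * k^3) - 2 * (∑' k, le1 p k)
     + 24 * (∑' k, le1 p k)^2 := by
  have hs : Summable (le1 p) := by
    refine (summ_lam_pow p hp 1).congr fun k => ?_
    rw [le1]; ring
  have h := lam_key p hp 1 0 (fun _ => 1) (fun k => by simp)
  have e1 : ∀ k : ℕ, le1 p k * (2 * (∑ j ∈ range k, ((k:ℝ) - j) * 1) - k * 1) = lx p k * k^3 := by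
    intro k
    have : ∀ m : ℕ, ∀ x : ℝ, ∑ j ∈ range m, (x - j) * 1 = m * x - m * (m-1)/2 := by
      intro m x
      induction m with
      | zero => simp
      | succ m ih => rw [sum_range_succ, ih]; push_cast; ring
    rw [this, le1]; ring
  have e2 : ∀ k : ℕ, (k:ℝ)^2 * le1 p k * 1 = lx p k * k^3 := by
    intro k; rw [le1]; ring
  have e3 : ∑' a : ℕ × ℕ, le1 p a.1 * le1 p a.2 * ((1:ℝ) + 1) = 2 * (∑' k, le1 p k)^2 := by
    rw [tsum_mul_right, sq, tsum_mul_tsum_of_summable_norm hs.norm hs.norm]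
    ring
  rw [tsum_congr e1, tsum_congr e2, e3] at h
  simp only [mul_one] at h
  rw [lgam]
  linear_combination h

theorem fP_ode (p : ℝ) (hp : |p| < 1) :
    PowerSeries.derivative ℝ (PowerSeries.derivative ℝ (fP p)) = 6 * fP p ^ 2
      + PowerSeries.C (1 - 24 * ∑' k, le1 p k) * fP p + PowerSeries.C (lgam p) := by
  have key : 2 * PowerSeries.derivative ℝ (PowerSeries.derivative ℝ (fL p)) =
      12 * (2 * fT * fL p - PowerSeries.C (∑' k, le1 p k) * (2 * fT)) + 24 * (fL p * fL p) 
        + 2 * (PowerSeries.C (1 - 24 * ∑' k, le1 p k) * fL p) + PowerSeries.C (lgam p) * fC 0 := by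
    ext n
    have h := lam_key p hp 1 n (fun k => PowerSeries.coeff n (fC k)) (fun k => abs_coeff_fC k n)
    have h1 := coeff_TL p hp n
    have h2 := coeff_fL_sq p hp n
    have h3 := coeff_D2_fL p n
    have h4 : PowerSeries.coeff n (fL p) = ∑' k, le1 p k * PowerSeries.coeff n (fC k) := by
      rw [fL, PowerSeries.coeff_mk]
    have t : ∀ (a : ℕ) [a.AtLeastTwo] (F : PowerSeries ℝ), PowerSeries.coeff n (OfNat.ofNat a * F) = (OfNat.ofNat a) * PowerSeries.coeff n F := by
      intro a _ F
      rw [show (OfNat.ofNat a : PowerSeries ℝ) = PowerSeries.C (OfNat.ofNat a : ℝ) from (map_ofNat _ a).symm, PowerSeries.coeff_C_mul]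
    have t2 : PowerSeries.coeff n (2 * (PowerSeries.C (1 - 24 * ∑' k, le1 p k) * fL p)) = 
        2 * ((1 - 24 * ∑' k, le1 p k) * PowerSeries.coeff n (fL p)) := by
      rw [t, PowerSeries.coeff_C_mul]
    rw [map_add, map_add, t2]
    simp only [map_add, map_sub, PowerSeries.coeff_C_mul, t, mul_assoc] at h1 ⊢
    rw [← h1, ← h3, ← h4] at h
    rw [h2, lgam]
    linear_combination -h
  have hT := fT_ode
  have h2 : ∀ F : PowerSeries ℝ, PowerSeries.derivative ℝ (2 * F) = 2 * PowerSeries.derivative ℝ F := by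
    intro F
    rw [two_mul, map_add, two_mul]
  rw [fP, map_add, map_add, h2, h2, hT, key, fC_zero]
  have : PowerSeries.C (1 - 24 * ∑' k, le1 p k) = 1 - 24 * PowerSeries.C (∑' k, le1 p k) := by
    rw [map_sub, map_mul, map_one, map_ofNat]
  rw [this]
  ring


/-- Lambert sums -/
noncomputable def lG (r : ℕ) (p : ℝ) : ℝ := ∑' k : ℕ, lx p k * (k:ℝ)^r

lemma lG_one (p : ℝ) : ∑' k, le1 p k = lG 1 p := tsum_congr fun k => by rw [le1]; ring

lemma sq_abs_lt (p : ℝ) (hp : |p| < 1) (n : ℕ) (hn : n ≠ 0) : |p^n| < 1 := by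
  rw [abs_pow]
  exact pow_lt_one₀ (abs_nonneg _) hp hn

lemma lx_two_mul (p : ℝ) (k : ℕ) : lx p (2*k) = lx (p^2) k := by
  rw [lx, lx, pow_mul]

lemma inj_even : Function.Injective fun k : ℕ => 2 * k := fun a b h => by simpa using h
lemma inj_odd : Function.Injective fun k : ℕ => 2 * k + 1 := fun a b h => by simpa using h

lemma tsum_split (f : ℕ → ℝ) (hf : Summable f) : ∑' k, f (2*k) + ∑' k, f (2*k+1) = ∑' k, f k :=
  tsum_even_add_odd (hf.comp_injective inj_even) (hf.comp_injective inj_odd)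

lemma lG_even (r : ℕ) (p : ℝ) :
    ∑' k : ℕ, lx p (2*k) * ((2*k : ℕ):ℝ)^r = 2^r * lG r (p^2) := by
  rw [lG, ← tsum_mul_left]
  refine tsum_congr fun k => ?_
  rw [lx_two_mul]; push_cast; ring

lemma lG_odd (r : ℕ) (p : ℝ) (hp : |p| < 1) :
    ∑' k : ℕ, lx p (2*k+1) * ((2*k+1 : ℕ):ℝ)^r = lG r p - 2^r * lG r (p^2) := by
  have hs := summ_lam_pow p hp r
  have := tsum_split _ hs
  rw [← lG_even, lG, ← this, add_sub_cancel_left]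

lemma lG_alt (r : ℕ) (p : ℝ) (hp : |p| < 1) :
    ∑' k : ℕ, (-1)^k * (lx p k * (k:ℝ)^r) = 2^(r+1) * lG r (p^2) - lG r p := by
  have hs := summ_lam_pow p hp r
  have hs' : Summable fun k : ℕ => (-1)^k * (lx p k * (k:ℝ)^r) := by
    rw [← summable_abs_iff] at hs ⊢
    refine hs.congr fun k => ?_
    rw [abs_mul ((-1)^k), abs_pow, abs_neg, abs_one, one_pow, one_mul]
  have := tsum_split _ hs'
  rw [← this]
  have h1 : ∀ k : ℕ, (-1:ℝ)^(2*k) * (lx p (2*k) * ((2*k:ℕ):ℝ)^r) = lx p (2*k) * ((2*k:ℕ):ℝ)^r := by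
    intro k; rw [pow_mul]; simp
  have h2 : ∀ k : ℕ, (-1:ℝ)^(2*k+1) * (lx p (2*k+1) * ((2*k+1:ℕ):ℝ)^r) = -(lx p (2*k+1) * ((2*k+1:ℕ):ℝ)^r) := by
    intro k; rw [pow_succ, pow_mul]; simp
  rw [tsum_congr h1, tsum_congr h2, tsum_neg, lG_odd r p hp, lG_even]
  ring

lemma lx_neg_odd (p : ℝ) (hp : |p| < 1) (k : ℕ) : lx (-p) (2*k+1) = 2 * lx (p^2) (2*k+1) - lx p (2*k+1) := by
  have h1 := lam_one_sub_ne p hp (2*k+1) (by omega)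
  have h2 := lam_one_sub_ne (-p) (by rwa [abs_neg]) (2*k+1) (by omega)
  have h3 := lam_one_sub_ne (p^2) (sq_abs_lt p hp 2 (by omega)) (2*k+1) (by omega)
  rw [lx, lx, lx]
  have e : (-p)^(2*k+1) = -p^(2*k+1) := Odd.neg_pow ⟨k, rfl⟩ p
  have e2 : (p^2)^(2*k+1) = (p^(2*k+1))^2 := by rw [← pow_mul, ← pow_mul, mul_comm]
  rw [e] at h2 ⊢
  rw [e2] at h3 ⊢
  generalize p^(2*k+1) = y at *
  field_simp
  ring

lemma lG_neg (r : ℕ) (p : ℝ) (hp : |p| < 1) :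
    lG r (-p) = - lG r p + (2^(r+1) + 2) * lG r (p^2) - 2^(r+1) * lG r (p^4) := by
  have hp' : |-p| < 1 := by rwa [abs_neg]
  have hp2 := sq_abs_lt p hp 2 (by omega)
  have h := lG_odd r (-p) hp'
  have h1 := lG_odd r p hp
  have h2 := lG_odd r (p^2) hp2
  have i1 := (summ_lam_pow p hp r).comp_injective inj_odd
  have i2 := (summ_lam_pow (p^2) hp2 r).comp_injective inj_odd
  simp only [Function.comp_def] at i1 i2
  have e : ∀ k : ℕ, lx (-p) (2*k+1) * ((2*k+1 : ℕ):ℝ)^r = 2 * (lx (p^2) (2*k+1) * ((2*k+1 : ℕ):ℝ)^r) -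
     lx p (2*k+1) * ((2*k+1 : ℕ):ℝ)^r := by
    intro k; rw [lx_neg_odd p hp]; ring
  rw [tsum_congr e, Summable.tsum_sub (i2.mul_left _) i1, tsum_mul_left, h1, h2, neg_sq, ← pow_mul] at h
  linear_combination -h

lemma coeff_fP_even (p : ℝ) (j : ℕ) :
    ((2*j).factorial : ℝ) * PowerSeries.coeff (2*j) (fP p) =
      (1 - 2^(2*j+2)) * ((bernoulli (2*j+2) : ℚ) : ℝ) / (2*j+2)
      + 2 * ∑' k : ℕ, (-1)^k * (lx p k * (k:ℝ)^(2*j+1)) := by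
  have hf : ((2*j).factorial : ℝ) ≠ 0 := by exact_mod_cast Nat.factorial_ne_zero _
  have t : PowerSeries.coeff (2*j) (2 * fL p) = 2 * PowerSeries.coeff (2*j) (fL p) := by
    rw [two_mul (fL p), map_add, ← two_mul]
  rw [fP, map_add, t, coeff_fT, fL, PowerSeries.coeff_mk, mul_add, mul_left_comm, ← tsum_mul_left]
  congr 1
  · push_cast
    field_simp
  · congr 1
    refine tsum_congr fun k => ?_
    rw [coeff_fC, Even.neg_pow (even_two_mul j), le1]
    field_simp
    ring

lemma coeff_one_fP (p : ℝ) : PowerSeries.coeff 1 (fP p) = 0 := by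
  have t : PowerSeries.coeff 1 (2 * fL p) = 2 * PowerSeries.coeff 1 (fL p) := by
    rw [two_mul, map_add, two_mul]
  rw [fP, map_add, t, coeff_one_fT, fL, PowerSeries.coeff_mk]
  simp [coeff_fC]

lemma bern4 : bernoulli 4 = -1/30 := by
  rw [bernoulli_eq_bernoulli'_of_ne_one (by norm_num), bernoulli'_four]

lemma coeff_zero_fP (p : ℝ) (hp : |p| < 1) : PowerSeries.coeff 0 (fP p) = 
    -1/4 + 2 * (4 * lG 1 (p^2) - lG 1 p) := by
  have h := coeff_fP_even p 0
  rw [lG_alt _ p hp] at h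
  norm_num [bernoulli_two] at h
  simp only [PowerSeries.coeff_zero_eq_constantCoeff, h]
  ring

lemma coeff_two_fP (p : ℝ) (hp : |p| < 1) : 2 * PowerSeries.coeff 2 (fP p) = 
    1/8 + 2 * (16 * lG 3 (p^2) - lG 3 p) := by
  have h := coeff_fP_even p 1
  rw [lG_alt _ p hp] at h
  norm_num [bern4] at h
  rw [h]

lemma fP_const (p : ℝ) (hp : |p| < 1) : 2 * PowerSeries.coeff 2 (fP p) =
    6 * PowerSeries.coeff 0 (fP p)^2 + (1 - 24 * lG 1 p) * PowerSeries.coeff 0 (fP p) + lgam p := by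
  have h := congrArg (PowerSeries.coeff 0) (fP_ode p hp)
  rw [PowerSeries.coeff_derivative, PowerSeries.coeff_derivative, map_add, map_add, PowerSeries.coeff_C_mul,
    lG_one] at h
  have t : PowerSeries.coeff 0 (6 * fP p ^ 2) = 6 * PowerSeries.coeff 0 (fP p)^2 := by
    rw [show (6 : PowerSeries ℝ) = PowerSeries.C (6:ℝ) from (map_ofNat _ 6).symm, PowerSeries.coeff_C_mul]
    simp
  rw [t] at h
  simp only [PowerSeries.coeff_zero_C] at h
  norm_num at h ⊢
  linear_combination h

lemma E_sq (p : ℝ) (hp : |p| < 1) : (1 + 24 * lG 1 p - 48 * lG 1 (p^2))^2 = 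
    1 + 48 * lG 3 p + 192 * lG 3 (p^2) := by
  have h := fP_const p hp
  rw [coeff_two_fP p hp, coeff_zero_fP p hp, lgam_eq p hp, lG_one] at h
  have e : ∑' k : ℕ, lx p k * (k:ℝ)^3 = lG 3 p := rfl
  rw [e] at h
  linear_combination -6 * h

/-- `L4` -/
noncomputable def L4 (q : ℝ) : ℝ := 1 + 8 * lG 1 q - 32 * lG 1 (q^4)

lemma L4_rel (q : ℝ) (hq : |q| < 1) : L4 q * L4 (-q) = L4 (-q^2)^2 ∧
    4 * L4 (q^2) = L4 q + L4 (-q) + 2 * L4 (-q^2) ∧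
    L4 q ^2 = 1 + 16 * (16 * lG 3 (q^2) - lG 3 (-q)) := by
  have hq2 := sq_abs_lt q hq 2 (by omega)
  have hq4 := sq_abs_lt q hq 4 (by omega)
  have n1 := lG_neg 1 q hq
  have n3 := lG_neg 3 q hq
  have m1 := lG_neg 1 (q^2) hq2
  have m3 := lG_neg 3 (q^2) hq2
  have e1 := E_sq q hq
  have e2 := E_sq (-q) (by rwa [abs_neg])
  have e3 := E_sq (q^2) hq2
  have e4 := E_sq (-q^2) (by rwa [abs_neg])
  have e5 := E_sq (q^4) hq4
  simp only [L4]
  have r1 : (-q)^4 = q^4 := by ring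
  have r2 : (-q^2)^4 = q^8 := by ring
  have r3 : (-q^2)^2 = q^4 := by ring
  have r4 : (q^2)^2 = q^4 := by ring
  have r5 : (q^2)^4 = q^8 := by ring
  have r6 : (q^4)^2 = q^8 := by ring
  rw [neg_sq] at e2
  rw [r3] at e4
  rw [r6] at e5
  rw [r4, r5] at m1 m3
  rw [r4] at e3
  rw [r1, r2, r5]
  rw [n1, n3] at e2
  rw [m1, m3] at e4
  rw [n1, m1, n3]
  generalize lG 1 q = x1 at *
  generalize lG 1 (q^2) = x2 at *
  generalize lG 1 (q^4) = x4 at *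
  generalize lG 1 (q^8) = x8 at *
  refine ⟨?_, ?_, ?_⟩
  · linear_combination -(e1 + e2 - 22 * e3 + 4 * (e4 + 4 * e5)) / 18
  · ring
  · linear_combination (e1 - e2) / 6 + (e1 + e2 + 16 * e3) / 18


lemma agm_step (u u' : ℝ) (h0 : 0 < u) (h : u'^2 * (1+u)^2 = 4 * u) :
    1 - u'^2 = (1 - u^2)^2 / (1+u)^4 := by
  have : 1 + u ≠ 0 := by positivity
  field_simp
  linear_combination -(1+u)^2 * h

lemma agm_one (u U : ℕ → ℝ) (hu : ∀ n, 0 < u n ∧ u n < 1) (hU : ∀ n, 0 < U n ∧ U n < 1)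
    (hu1 : ∀ n, u (n+1)^2 * (1 + u n)^2 = 4 * u n) (hU1 : ∀ n, U (n+1)^2 * (1 + U n)^2 = 4 * U n)
    (hl : Filter.Tendsto (fun n => (1 - u n^2) / (1 - U n^2)) Filter.atTop (nhds 1)) :
    u 0 ≤ U 0 := by
  by_contra hlt
  push Not at hlt
  have hr : ∀ n, 0 < 1 - u n^2 := fun n => by nlinarith [hu n]
  have hR : ∀ n, 0 < 1 - U n^2 := fun n => by nlinarith [hU n]
  have key : ∀ n, U n < u n → (1 - u (n+1)^2) / (1 - U (n+1)^2) ≤ (1 - u n^2) / (1 - U n^2) := by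
    intro n hn
    rw [agm_step _ _ (hu n).1 (hu1 n), agm_step _ _ (hU n).1 (hU1 n)]
    have e : ((1 - u n^2)^2 / (1+u n)^4) / ((1 - U n^2)^2 / (1+U n)^4) =
       ((1 - u n^2)/(1 - U n^2))^2 * ((1 + U n)^4 / (1 + u n)^4) := by
      have := (hU n).1
      have := (hu n).1
      have := (hR n).ne'
      field_simp
    rw [e]
    have h1 : (1 + U n)^4 / (1 + u n)^4 ≤ 1 := by
      have := (hU n).1
      rw [div_le_one (by have := (hu n).1; positivity)]
      gcongr
    have h2 : (1 - u n^2)/(1 - U n^2) ≤ 1 := by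
      rw [div_le_one (hR n)]
      nlinarith [hU n]
    have h3 : 0 < (1 - u n^2)/(1 - U n^2) := div_pos (hr n) (hR n)
    nlinarith [sq_nonneg ((1 - u n^2)/(1 - U n^2))]
  have x0 : (1 - u 0^2)/(1 - U 0^2) < 1 := by
    rw [div_lt_one (hR 0)]
    nlinarith [hU 0]
  have ind : ∀ n, U n < u n ∧ (1 - u n^2) / (1 - U n^2) ≤ (1 - u 0^2)/(1 - U 0^2) := by
    intro n
    induction n with
    | zero => exact ⟨hlt, le_rfl⟩
    | succ n ih =>
      have hk := (key n ih.1).trans ih.2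
      refine ⟨?_, hk⟩
      have := hk.trans_lt x0
      rw [div_lt_one (hR _)] at this
      have := (hu (n+1)).1
      nlinarith [hU (n+1)]
  have := le_of_tendsto' hl fun n => (ind n).2
  linarith

lemma agm_two (u U : ℕ → ℝ) (hu : ∀ n, 0 < u n ∧ u n < 1) (hU : ∀ n, 0 < U n ∧ U n < 1)
    (hu1 : ∀ n, u (n+1)^2 * (1 + u n)^2 = 4 * u n) (hU1 : ∀ n, U (n+1)^2 * (1 + U n)^2 = 4 * U n)
    (hl : Filter.Tendsto (fun n => (1 - u n^2) / (1 - U n^2)) Filter.atTop (nhds 1)) (N : ℕ) :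
    u N = U N := by
  have hl' : Filter.Tendsto (fun n => (1 - U n^2) / (1 - u n^2)) Filter.atTop (nhds 1) := by
    have := hl.inv₀ one_ne_zero
    simpa using this
  have hs : Filter.Tendsto (fun n : ℕ => n + N) Filter.atTop Filter.atTop := Filter.tendsto_add_atTop_nat N
  apply le_antisymm
  · have := agm_one (fun n => u (n+N)) (fun n => U (n+N)) (fun n => hu _) (fun n => hU _)
      (fun n => by rw [add_right_comm]; exact hu1 _) (fun n => by rw [add_right_comm]; exact hU1 _) (hl.comp hs)
    simpa using this
  · have := agm_one (fun n => U (n+N)) (fun n => u (n+N)) (fun n => hU _) (fun n => hu _)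
      (fun n => by rw [add_right_comm]; exact hU1 _) (fun n => by rw [add_right_comm]; exact hu1 _) (hl'.comp hs)
    simpa using this

lemma agm_unique (s t S T q : ℕ → ℝ) (hs : ∀ n, 0 < s n) (ht : ∀ n, 0 < t n) (hS : ∀ n, 0 < S n) (hT : ∀ n, 0 < T n)
    (hst : ∀ n, t n < s n) (hST : ∀ n, T n < S n)
    (s1 : ∀ n, s (n+1) = (s n + t n)/2) (t1 : ∀ n, t (n+1)^2 = s n * t n)
    (S1 : ∀ n, S (n+1) = (S n + T n)/2) (T1 : ∀ n, T (n+1)^2 = S n * T n)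
    (hq : ∀ n, 0 < q n)
    (ls : Filter.Tendsto s Filter.atTop (nhds 1)) (lS : Filter.Tendsto S Filter.atTop (nhds 1))
    (ld : Filter.Tendsto (fun n => (s n^2 - t n^2) / q n) Filter.atTop (nhds 16))
    (lD : Filter.Tendsto (fun n => (S n^2 - T n^2) / q n) Filter.atTop (nhds 16)) : s 0 = S 0 := by
  have step : ∀ (a b a' b' : ℝ), 0 < a → 0 < b → a' = (a+b)/2 → b'^2 = a*b → (b'/a')^2 * (1 + b/a)^2 = 4 * (b/a) := by
    intro a b a' b' ha hb h1 h2
    rw [div_pow, h2, h1]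
    field_simp
    ring
  have main := agm_two (fun n => t n / s n) (fun n => T n / S n)
    (fun n => ⟨div_pos (ht n) (hs n), (div_lt_one (hs n)).mpr (hst n)⟩)
    (fun n => ⟨div_pos (hT n) (hS n), (div_lt_one (hS n)).mpr (hST n)⟩)
    (fun n => step _ _ _ _ (hs n) (ht n) (s1 n) (t1 n))
    (fun n => step _ _ _ _ (hS n) (hT n) (S1 n) (T1 n)) (by
      have := (ld.div lD (by norm_num)).mul ((lS.pow 2).div (ls.pow 2) (by norm_num))
      norm_num at this
      refine this.congr fun n => ?_
      have h1 := (hs n).ne'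
      have h2 := (hS n).ne'
      have h3 := (hq n).ne'
      have h4 : S n^2 - T n^2 ≠ 0 := by nlinarith [hST n, hT n, hS n]
      have h5 : 1 - (T n/S n)^2 ≠ 0 := by
        intro h
        apply h4
        field_simp at h
        linarith
      field_simp)
  have c : ∀ n, s n / S n = s 0 / S 0 := by
    intro n
    induction n with
    | zero => rfl
    | succ n ih =>
      rw [← ih, s1, S1]
      have h := main n
      have h1 := hs n
      have h2 := hS n
      have h3 := hT n
      field_simp at h ⊢
      linear_combination h
  have l := ls.div lS one_ne_zero
  have : Filter.Tendsto (fun n : ℕ => s 0 / S 0) Filter.atTop (nhds (1/1)) := l.congr c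
  have e := tendsto_nhds_unique this tendsto_const_nhds
  have h2 := (hS 0).ne'
  field_simp at e
  linarith


lemma summ_theta (q : ℝ) (hq : |q| < 1) : Summable fun n : ℤ => q ^ (n.natAbs^2) := by
  have h : Summable fun n : ℕ => q^(n^2) := by
    refine Summable.of_norm_bounded (summable_geometric_of_lt_one (abs_nonneg q) hq) fun n => ?_
    rw [Real.norm_eq_abs, abs_pow]
    exact pow_le_pow_of_le_one (abs_nonneg q) hq.le (Nat.le_self_pow (by norm_num) n)
  rw [summable_int_iff_summable_nat_and_neg]
  refine ⟨?_, ?_⟩ <;> simpa using h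

lemma theta_sgn (n : ℤ) : (-1:ℝ)^(n.natAbs^2) = if Even n then 1 else -1 := by
  split_ifs with h
  · exact Even.neg_one_pow ((Int.natAbs_even.mpr h).pow_of_ne_zero (by norm_num))
  · exact Odd.neg_one_pow ((Int.natAbs_odd.mpr (Int.not_even_iff_odd.mp h)).pow)

lemma tsum_lattice (f : ℤ × ℤ → ℝ) (hf : ∀ a, ¬ Even (a.1 + a.2) → f a = 0) :
    ∑' a, f a = ∑' a : ℤ × ℤ, f (a.1 + a.2, a.1 - a.2) := by
  have hg : Function.Injective fun a : ℤ × ℤ => (a.1 + a.2, a.1 - a.2) := by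
    rintro ⟨a, b⟩ ⟨c, d⟩ h
    simp only [Prod.mk.injEq] at h
    ext <;> simp <;> omega
  rw [← hg.tsum_eq]
  intro a ha
  have : Even (a.1 + a.2) := by
    by_contra h
    exact ha (hf a h)
  obtain ⟨r, hr⟩ := this
  exact ⟨(r, a.1 - r), by ext <;> simp; omega⟩

lemma prod_gen (f g : ℤ → ℝ) (hf : Summable f) (hg : Summable g) :
    Summable (fun a : ℤ × ℤ => f a.1 * g a.2) ∧
    (∑' n, f n) * (∑' n, g n) = ∑' a : ℤ × ℤ, f a.1 * g a.2 :=
  ⟨summable_mul_of_summable_norm hf.norm hg.norm, tsum_mul_tsum_of_summable_norm hf.norm hg.norm⟩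

lemma theta_mul (x y : ℝ) (hx : |x| < 1) (hy : |y| < 1) :
    Summable (fun a : ℤ × ℤ => x^(a.1.natAbs^2) * y^(a.2.natAbs^2)) ∧
    sqGen x * sqGen y = ∑' a : ℤ × ℤ, x^(a.1.natAbs^2) * y^(a.2.natAbs^2) := by
  have h := prod_gen (fun n => x^(n.natAbs^2)) (fun n => y^(n.natAbs^2)) (summ_theta x hx) (summ_theta y hy)
  rw [sqGen, sqGen]
  exact h

lemma lat_exp (s t : ℤ) : (s+t).natAbs^2 + (s-t).natAbs^2 = 2 * (s.natAbs^2 + t.natAbs^2) := by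
  zify
  simp only [sq_abs]
  ring

lemma theta_one (q : ℝ) (hq : |q| < 1) : sqGen q ^2 + sqGen (-q)^2 = 2 * sqGen (q^2)^2 := by
  have hq' : |-q| < 1 := by rwa [abs_neg]
  obtain ⟨a1, a2⟩ := theta_mul q q hq hq
  obtain ⟨b1, b2⟩ := theta_mul (-q) (-q) hq' hq'
  obtain ⟨c1, c2⟩ := theta_mul (q^2) (q^2) (sq_abs_lt q hq 2 (by norm_num)) (sq_abs_lt q hq 2 (by norm_num))
  rw [sq, sq, sq (sqGen (q^2)), a2, b2, c2, ← Summable.tsum_add a1 b1, tsum_lattice, ← tsum_mul_left]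
  · refine tsum_congr fun a => ?_
    simp only [← pow_add, lat_exp, ← pow_mul, ← mul_add]
    rw [Even.neg_pow (even_two_mul _)]
    ring
  · intro a ha
    rw [neg_pow q, neg_pow q, theta_sgn, theta_sgn]
    rw [Int.even_add] at ha
    by_cases h1 : Even a.1 <;> by_cases h2 : Even a.2 <;> simp [h1, h2] at ha ⊢

lemma theta_two (q : ℝ) (hq : |q| < 1) : sqGen q * sqGen (-q) = sqGen (-q^2)^2 := by
  have hq' : |-q| < 1 := by rwa [abs_neg]
  have hq2 : |-q^2| < 1 := by rw [abs_neg]; exact sq_abs_lt q hq 2 (by norm_num)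
  obtain ⟨a1, a2⟩ := theta_mul q (-q) hq hq'
  obtain ⟨b1, b2⟩ := theta_mul (-q) q hq' hq
  obtain ⟨c1, c2⟩ := theta_mul (-q^2) (-q^2) hq2 hq2
  have : 2 * (sqGen q * sqGen (-q)) = 2 * sqGen (-q^2)^2 := by
    rw [two_mul]
    nth_rewrite 2 [mul_comm]
    rw [sq, a2, b2, c2, ← Summable.tsum_add a1 b1, tsum_lattice, ← tsum_mul_left]
    · refine tsum_congr fun a => ?_
      simp only
      rw [neg_pow q, neg_pow q, neg_pow (q^2), neg_pow (q^2), theta_sgn, theta_sgn, theta_sgn, theta_sgn]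
      have e : q^((a.1+a.2).natAbs^2) * q^((a.1-a.2).natAbs^2) = (q^2)^(a.1.natAbs^2) * (q^2)^(a.2.natAbs^2) := by
        rw [← pow_add, lat_exp, ← pow_mul, ← pow_mul, ← pow_add, ← mul_add]
      simp only [Int.even_add, Int.even_sub]
      by_cases h1 : Even a.1 <;> by_cases h2 : Even a.2 <;> simp [h1, h2] <;> linarith
    · intro a ha
      rw [neg_pow q, neg_pow q, theta_sgn, theta_sgn]
      rw [Int.even_add] at ha
      by_cases h1 : Even a.1 <;> by_cases h2 : Even a.2 <;> simp [h1, h2] at ha ⊢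
  linarith

lemma theta_pos (q : ℝ) (hq0 : 0 < q) (hq : q < 1) : 1 ≤ sqGen q := by
  have := (summ_theta q (by rwa [abs_of_pos hq0])).le_tsum 0 fun n _ => by positivity
  rw [sqGen]
  simpa using this

lemma theta_asymp : ∃ C : ℝ, ∀ x : ℝ, |x| ≤ 1/2 → |sqGen x - 1 - 2 * x| ≤ C * x^2 := by
  have hh := summ_theta (1/2) (by norm_num [abs_of_pos])
  refine ⟨4 * ∑' n : ℤ, (1/2:ℝ)^(n.natAbs^2), fun x hx => ?_⟩
  have hs := summ_theta x (by linarith)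
  let g : ℤ → ℝ := fun n => if n ∈ ({-1, 0, 1} : Finset ℤ) then x^(n.natAbs^2) else 0
  have hg : HasSum g (∑ n ∈ ({-1, 0, 1} : Finset ℤ), g n) := 
    hasSum_sum_of_ne_finset_zero fun n hn => by simp only [g]; rw [if_neg hn]
  have hgv : ∑ n ∈ ({-1, 0, 1} : Finset ℤ), g n = 1 + 2 * x := by
    simp [g]; ring
  rw [hgv] at hg
  have e : sqGen x - 1 - 2 * x = ∑' n : ℤ, (x^(n.natAbs^2) - g n) := by
    rw [Summable.tsum_sub hs hg.summable, hg.tsum_eq, sqGen]; ring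
  have hb : ∀ n : ℤ, ‖x^(n.natAbs^2) - g n‖ ≤ 4 * x^2 * (1/2:ℝ)^(n.natAbs^2) := by
    intro n
    simp only [g]
    split_ifs with h
    · rw [sub_self, norm_zero]; positivity
    · have h2 : 2 ≤ n.natAbs := by
        simp only [mem_insert, mem_singleton, not_or] at h
        omega
      have h3 : 2 ≤ n.natAbs^2 := by nlinarith
      obtain ⟨m, hm⟩ := Nat.exists_eq_add_of_le h3
      rw [hm, sub_zero, Real.norm_eq_abs, abs_pow, pow_add, pow_add, sq_abs]
      have : |x|^m ≤ (1/2)^m := by gcongr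
      have h5 : 0 ≤ x^2 := sq_nonneg x
      nlinarith [mul_le_mul_of_nonneg_left this h5]
  rw [e, ← Real.norm_eq_abs]
  refine (tsum_of_norm_bounded (hh.mul_left (4*x^2)).hasSum hb).trans ?_
  rw [tsum_mul_left]
  apply le_of_eq; ring

lemma lG_asymp : ∃ C : ℝ, 0 ≤ C ∧ ∀ x : ℝ, |x| ≤ 1/2 → |lG 1 x - x| ≤ C * x^2 := by
  have hh := summ_base (1/2) (by norm_num) (by norm_num) 1
  refine ⟨8 * ∑' n : ℕ, ((n:ℝ)+1)^1 * (1/2:ℝ)^n, by positivity, fun x hx => ?_⟩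
  have hx1 : |x| < 1 := by linarith
  have hs := summ_lam_pow x hx1 1
  have hg : HasSum (fun n : ℕ => if n = 1 then x else 0) x := hasSum_ite_eq 1 x
  have e : lG 1 x - x = ∑' n : ℕ, (lx x n * (n:ℝ)^1 - if n = 1 then x else 0) := by
    rw [Summable.tsum_sub hs hg.summable, hg.tsum_eq, lG]
  have hb : ∀ n : ℕ, ‖(lx x n * (n:ℝ)^1 - if n = 1 then x else 0)‖ ≤ 8 * x^2 * (((n:ℝ)+1)^1 * (1/2:ℝ)^n) := by
    intro n
    rcases Nat.lt_or_ge n 2 with h | h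
    · interval_cases n
      · simp; positivity
      · have h1 : 1 - x ≠ 0 := by simpa using lam_one_sub_ne x hx1 1 one_ne_zero
        have e : lx x 1 * ((1:ℕ):ℝ)^1 - (if 1 = 1 then x else 0) = x^2 / (1-x) := by
          rw [lx, if_pos rfl]; push_cast; field_simp; ring
        rw [e, Real.norm_eq_abs, abs_div, abs_of_nonneg (sq_nonneg x)]
        have h2 : 1/2 ≤ |1-x| := by
          have := abs_le.mp hx
          rw [abs_of_nonneg (by linarith)]; linarith
        rw [div_le_iff₀ (by linarith)]
        push_cast
        nlinarith [sq_nonneg x]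
    · rw [if_neg (by omega), sub_zero, Real.norm_eq_abs, abs_mul, pow_one, Nat.abs_cast, pow_one]
      have h1 := lx_bound x hx1 n
      obtain ⟨m, rfl⟩ := Nat.exists_eq_add_of_le h
      rw [pow_add, sq_abs] at h1
      have h2 : (1-|x|)⁻¹ ≤ 2 := by
        rw [inv_le_comm₀ (by linarith) (by norm_num)]; linarith
      have h3 : |x|^m ≤ (1/2)^m := by gcongr
      calc |lx x (2+m)| * ((2+m:ℕ):ℝ) ≤ (2 * (x^2 * (1/2)^m)) * (((2+m:ℕ):ℝ) + 1) := by
            gcongr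
            · exact h1.trans (by gcongr)
            · linarith
        _ = _ := by rw [pow_add (1/2:ℝ)]; ring
  rw [e, ← Real.norm_eq_abs]
  refine (tsum_of_norm_bounded (hh.mul_left (8*x^2)).hasSum hb).trans ?_
  rw [tsum_mul_left]
  apply le_of_eq; ring

lemma L4_asymp : ∃ C : ℝ, ∀ x : ℝ, |x| ≤ 1/2 → |L4 x - 1 - 8 * x| ≤ C * x^2 := by
  obtain ⟨C, hC, h⟩ := lG_asymp
  refine ⟨8 * C + 32 * (1 + C), fun x hx => ?_⟩
  have h1 := h x hx
  have hx1 : |x| ≤ 1 := by linarith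
  have hx2 : x^2 ≤ 1 := by rw [← sq_abs]; exact pow_le_one₀ (abs_nonneg _) hx1
  have hx0 : 0 ≤ x^2 := sq_nonneg x
  have hx4 : |x^4| ≤ 1/2 := by
    rw [abs_pow]
    calc |x|^4 ≤ |x|^1 := pow_le_pow_of_le_one (abs_nonneg _) hx1 (by norm_num)
      _ ≤ _ := by simpa using hx
  have h2 := h (x^4) hx4
  have h3 : |lG 1 (x^4)| ≤ (1 + C) * x^2 := by
    have e1 : (x^4)^2 ≤ x^2 := by
      have : (x^4)^2 = x^2 * (x^2)^3 := by ring
      rw [this]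
      exact mul_le_of_le_one_right hx0 (pow_le_one₀ hx0 hx2)
    have e2 : x^4 ≤ x^2 := by nlinarith
    have e3 : |x^4| = x^4 := abs_of_nonneg (by positivity)
    have := abs_sub_abs_le_abs_sub (lG 1 (x^4)) (x^4)
    nlinarith
  rw [L4]
  rw [abs_le] at h1 h3 ⊢
  constructor <;> linarith

lemma asymp_lim (f : ℝ → ℝ) (c C : ℝ) (h : ∀ x : ℝ, |x| ≤ 1/2 → |f x - 1 - c * x| ≤ C * x^2)
    (q : ℕ → ℝ) (hq : ∀ n, 0 < q n) (hl : Filter.Tendsto q Filter.atTop (nhds 0)) :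
    Filter.Tendsto (fun n => f (q n)) Filter.atTop (nhds 1) ∧
    Filter.Tendsto (fun n => f (-q n)) Filter.atTop (nhds 1) ∧
    Filter.Tendsto (fun n => (f (q n) - f (-q n)) / q n) Filter.atTop (nhds (2 * c)) := by
  have ev : ∀ᶠ n in Filter.atTop, |q n| ≤ 1/2 := by
    have := hl.abs
    rw [abs_zero] at this
    exact (this.eventually (gt_mem_nhds (by norm_num : (0:ℝ) < 1/2))).mono fun n h => h.le
  have gen : ∀ r : ℕ → ℝ, (∀ᶠ n in Filter.atTop, |r n| ≤ 1/2) → Filter.Tendsto r Filter.atTop (nhds 0) →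
      Filter.Tendsto (fun n => f (r n)) Filter.atTop (nhds 1) := by
    intro r hr hr0
    have h1 : Filter.Tendsto (fun n => f (r n) - 1 - c * r n) Filter.atTop (nhds 0) := by
      apply squeeze_zero_norm' (a := fun n => C * r n^2)
      · filter_upwards [hr] with n hn using h _ hn
      · simpa using (hr0.pow 2).const_mul C
    have := (h1.add_const 1).add (hr0.const_mul c)
    simp only [mul_zero, zero_add, add_zero] at this
    refine this.congr fun n => ?_
    ring
  refine ⟨gen q ev hl, gen (fun n => - q n) (by simpa using ev) (by simpa using hl.neg), ?_⟩
  have h1 : Filter.Tendsto (fun n => (f (q n) - f (-q n)) / q n - 2 * c) Filter.atTop (nhds 0) := by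
    apply squeeze_zero_norm' (a := fun n => 2 * C * q n)
    · filter_upwards [ev] with n hn
      have a1 := h _ hn
      have a2 := h (- q n) (by rwa [abs_neg])
      have hn0 := hq n
      have e : (f (q n) - f (-q n)) / q n - 2 * c = 
          ((f (q n) - 1 - c * q n) - (f (-q n) - 1 - c * (- q n))) / q n := by
        field_simp; ring
      rw [e, Real.norm_eq_abs, abs_div, abs_of_pos hn0, div_le_iff₀ hn0]
      refine (abs_sub _ _).trans ?_
      rw [neg_sq] at a2
      nlinarith
    · simpa using hl.const_mul (2 * C)
  have := h1.add_const (2 * c)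
  simpa using this


lemma qn_mem (q : ℝ) (h0 : 0 < q) (h1 : q < 1) (n : ℕ) : 0 < q^(2^n) ∧ q^(2^n) < 1 :=
  ⟨by positivity, pow_lt_one₀ h0.le h1 (by positivity)⟩

lemma qn_succ (q : ℝ) (n : ℕ) : q^(2^(n+1)) = (q^(2^n))^2 := by rw [pow_succ, pow_mul]

lemma qn_lim (q : ℝ) (h0 : 0 < q) (h1 : q < 1) :
    Filter.Tendsto (fun n : ℕ => q^(2^n)) Filter.atTop (nhds 0) :=
  (tendsto_pow_atTop_nhds_zero_of_lt_one h0.le h1).comp (tendsto_pow_atTop_atTop_of_one_lt (by norm_num))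

/-- pairs satisfying the AGM recursion, suitably normalised at `0`. -/
structure AGMPair (s t : ℝ → ℝ) : Prop where
  hs : ∀ x, 0 < x → x < 1 → 0 < s x
  ht : ∀ x, 0 < x → x < 1 → 0 < t x
  s1 : ∀ x, 0 < x → x < 1 → s (x^2) = (s x + t x) / 2
  t1 : ∀ x, 0 < x → x < 1 → t (x^2)^2 = s x * t x
  ls : ∀ x, 0 < x → x < 1 → Filter.Tendsto (fun n : ℕ => s (x^(2^n))) Filter.atTop (nhds 1)
  ld : ∀ x, 0 < x → x < 1 → Filter.Tendsto (fun n : ℕ => (s (x^(2^n))^2 - t (x^(2^n))^2) / x^(2^n))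
    Filter.atTop (nhds 16)

lemma AGMPair.lt (s t : ℝ → ℝ) (h : AGMPair s t) (x : ℝ) (h0 : 0 < x) (h1 : x < 1) : t x < s x := by
  have hle : t x ≤ s x := by
    have y0 : 0 < √x := Real.sqrt_pos.mpr h0
    have y1 : √x < 1 := by rw [Real.sqrt_lt' one_pos]; simpa using h1
    have a := h.s1 _ y0 y1
    have b := h.t1 _ y0 y1
    rw [Real.sq_sqrt h0.le] at a b
    have c := h.hs _ y0 y1
    have d := h.ht _ y0 y1
    refine le_of_sq_le_sq ?_ (h.hs x h0 h1).le
    rw [a, b]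
    nlinarith [sq_nonneg (s √x - t √x)]
  refine lt_of_le_of_ne hle fun e => ?_
  have ind : ∀ n : ℕ, t (x^(2^n)) = s (x^(2^n)) := by
    intro n
    induction n with
    | zero => simpa using e
    | succ n ih =>
      obtain ⟨m0, m1⟩ := qn_mem x h0 h1 n
      obtain ⟨m0', m1'⟩ := qn_mem x h0 h1 (n+1)
      have a := h.s1 _ m0 m1
      have b := h.t1 _ m0 m1
      rw [← qn_succ, ih] at a b
      have c := h.hs _ m0 m1
      have d := h.ht _ m0' m1'
      have a' : s (x^2^(n+1)) = s (x^2^n) := by linarith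
      rw [a']
      nlinarith
  have := h.ld x h0 h1
  have h2 : Filter.Tendsto (fun n : ℕ => (0:ℝ)) Filter.atTop (nhds 16) :=
    this.congr fun n => by rw [ind n, sub_self, zero_div]
  have := tendsto_nhds_unique h2 tendsto_const_nhds
  norm_num at this

lemma AGMPair.unique (s t S T : ℝ → ℝ) (h : AGMPair s t) (H : AGMPair S T) (x : ℝ) (h0 : 0 < x) (h1 : x < 1) :
    s x = S x := by
  have m := qn_mem x h0 h1
  have := agm_unique (fun n => s (x^(2^n))) (fun n => t (x^(2^n))) (fun n => S (x^(2^n))) (fun n => T (x^(2^n)))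
    (fun n => x^(2^n))
    (fun n => h.hs _ (m n).1 (m n).2) (fun n => h.ht _ (m n).1 (m n).2)
    (fun n => H.hs _ (m n).1 (m n).2) (fun n => H.ht _ (m n).1 (m n).2)
    (fun n => h.lt _ _ _ (m n).1 (m n).2) (fun n => H.lt _ _ _ (m n).1 (m n).2)
    (fun n => by simp only [qn_succ]; exact h.s1 _ (m n).1 (m n).2)
    (fun n => by simp only [qn_succ]; exact h.t1 _ (m n).1 (m n).2)
    (fun n => by simp only [qn_succ]; exact H.s1 _ (m n).1 (m n).2)
    (fun n => by simp only [qn_succ]; exact H.t1 _ (m n).1 (m n).2)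
    (fun n => (m n).1) (h.ls x h0 h1) (H.ls x h0 h1) (h.ld x h0 h1) (H.ld x h0 h1)
  simpa using this

lemma ne_zero_iter (f : ℝ → ℝ) (hf : ∀ x, 0 < x → x < 1 → f (-x) = 0 → f (-x^2) = 0)
    (x : ℝ) (h0 : 0 < x) (h1 : x < 1)
    (hl : Filter.Tendsto (fun n : ℕ => f (-x^(2^n))) Filter.atTop (nhds 1)) : f (-x) ≠ 0 := by
  intro e
  have ind : ∀ n : ℕ, f (-x^(2^n)) = 0 := by
    intro n
    induction n with
    | zero => simpa using e
    | succ n ih =>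
      rw [qn_succ]
      exact hf _ (qn_mem x h0 h1 n).1 (qn_mem x h0 h1 n).2 ih
  have h2 : Filter.Tendsto (fun n : ℕ => (0:ℝ)) Filter.atTop (nhds 1) := hl.congr ind
  have := tendsto_nhds_unique h2 tendsto_const_nhds
  norm_num at this

lemma theta_agm : AGMPair (fun x => sqGen x^2) (fun x => sqGen (-x)^2) := by
  obtain ⟨C, hC⟩ := theta_asymp
  have lim := fun (x : ℝ) (h0 : 0 < x) (h1 : x < 1) => asymp_lim sqGen 2 C hC (fun n => x^(2^n)) 
    (fun n => (qn_mem x h0 h1 n).1) (qn_lim x h0 h1)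
  have ab : ∀ x : ℝ, 0 < x → x < 1 → |x| < 1 := fun x h0 h1 => by rwa [abs_of_pos h0]
  refine ⟨?_, ?_, ?_, ?_, ?_, ?_⟩
  · intro x h0 h1
    have := theta_pos x h0 h1
    positivity
  · intro x h0 h1
    have := ne_zero_iter sqGen (fun x h0 h1 h => by
      have := theta_two x (ab x h0 h1)
      rw [h, mul_zero] at this
      exact pow_eq_zero_iff (two_ne_zero) |>.mp this.symm) x h0 h1 (lim x h0 h1).2.1
    positivity
  · intro x h0 h1
    have := theta_one x (ab x h0 h1)
    linarith
  · intro x h0 h1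
    have := theta_two x (ab x h0 h1)
    rw [← this]; ring
  · intro x h0 h1
    simpa using (lim x h0 h1).1.pow 2
  · intro x h0 h1
    obtain ⟨l1, l2, l3⟩ := lim x h0 h1
    have := (((l1.pow 2).add (l2.pow 2)).mul (l1.add l2)).mul l3
    norm_num at this
    refine this.congr fun n => ?_
    ring

lemma L4_pos (q : ℝ) (h0 : 0 < q) (h1 : q < 1) : 0 < L4 q := by
  have key : ∀ x : ℝ, 0 < x → x < 1 → 2 * lG 1 (x^2) ≤ lG 1 x := by
    intro x h0 h1
    have := lG_odd 1 x (by rwa [abs_of_pos h0])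
    have h : 0 ≤ ∑' k : ℕ, lx x (2*k+1) * ((2*k+1 : ℕ):ℝ)^1 := tsum_nonneg fun k => by
      have : x^(2*k+1) < 1 := pow_lt_one₀ h0.le h1 (by omega)
      have : 0 ≤ lx x (2*k+1) := div_nonneg (by positivity) (by linarith)
      positivity
    rw [this] at h
    linarith
  have a := key q h0 h1
  have b := key (q^2) (by positivity) (pow_lt_one₀ h0.le h1 (by norm_num))
  rw [← pow_mul] at b
  rw [L4]
  norm_num at b
  linarith

lemma L4_agm : AGMPair (fun x => √(L4 x)) (fun x => √(L4 (-x))) := by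
  obtain ⟨C, hC⟩ := L4_asymp
  have lim := fun (x : ℝ) (h0 : 0 < x) (h1 : x < 1) => asymp_lim L4 8 C hC (fun n => x^(2^n)) 
    (fun n => (qn_mem x h0 h1 n).1) (qn_lim x h0 h1)
  have ab : ∀ x : ℝ, 0 < x → x < 1 → |x| < 1 := fun x h0 h1 => by rwa [abs_of_pos h0]
  have np : ∀ x : ℝ, 0 < x → x < 1 → 0 < L4 (-x) := by
    intro x h0 h1
    have hne := ne_zero_iter L4 (fun x h0 h1 h => by
      have := (L4_rel x (ab x h0 h1)).1
      rw [h, mul_zero] at this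
      exact pow_eq_zero_iff (two_ne_zero) |>.mp this.symm) x h0 h1 (lim x h0 h1).2.1
    have a := L4_pos x h0 h1
    have b := (L4_rel x (ab x h0 h1)).1
    by_contra hn
    have : L4 (-x) < 0 := lt_of_le_of_ne (not_lt.mp hn) hne
    nlinarith [sq_nonneg (L4 (-x^2))]
  have sqm : ∀ x : ℝ, 0 < x → x < 1 → √(L4 x) * √(L4 (-x)) = L4 (-x^2) := by
    intro x h0 h1
    rw [← Real.sqrt_mul (L4_pos x h0 h1).le, (L4_rel x (ab x h0 h1)).1]
    exact Real.sqrt_sq (np (x^2) (by positivity) (pow_lt_one₀ h0.le h1 (by norm_num))).le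
  refine ⟨?_, ?_, ?_, ?_, ?_, ?_⟩
  · intro x h0 h1
    exact Real.sqrt_pos.mpr (L4_pos x h0 h1)
  · intro x h0 h1
    exact Real.sqrt_pos.mpr (np x h0 h1)
  · intro x h0 h1
    have a := (L4_rel x (ab x h0 h1)).2.1
    have b := sqm x h0 h1
    have c := Real.sq_sqrt (L4_pos x h0 h1).le
    have d := Real.sq_sqrt (np x h0 h1).le
    rw [Real.sqrt_eq_iff_mul_self_eq (L4_pos (x^2) (by positivity) (pow_lt_one₀ h0.le h1 (by norm_num))).le (by positivity)]
    linear_combination (1/4)*a - (1/4) * c - (1/4) * d - (1/2)*b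
  · intro x h0 h1
    rw [sqm x h0 h1, Real.sq_sqrt]
    exact (np (x^2) (by positivity) (pow_lt_one₀ h0.le h1 (by norm_num))).le
  · intro x h0 h1
    simpa using (lim x h0 h1).1.sqrt
  · intro x h0 h1
    have := (lim x h0 h1).2.2
    norm_num at this
    refine this.congr fun n => ?_
    obtain ⟨m0, m1⟩ := qn_mem x h0 h1 n
    rw [Real.sq_sqrt (L4_pos _ m0 m1).le, Real.sq_sqrt (np _ m0 m1).le]

theorem theta_eight (q : ℝ) (h0 : 0 < q) (h1 : q < 1) :
    sqGen q ^ 8 = 1 + 16 * (16 * lG 3 (q^2) - lG 3 (-q)) := by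
  have h := AGMPair.unique _ _ _ _ L4_agm theta_agm q h0 h1
  have h2 : L4 q = sqGen q^4 := by
    rw [← Real.sq_sqrt (L4_pos q h0 h1).le, h]; ring
  rw [← (L4_rel q (by rwa [abs_of_pos h0])).2.2, h2]
  ring


lemma final_entry (q : ℝ) (h0 : 0 < q) (h1 : q < 1) (i j : ℕ) :
    tangentNum (i + j + 2) +
            4 * (-1 : ℝ) ^ (i + j) *
              ∑' k : ℕ, q ^ (k + 1) * ((k : ℝ) + 1) ^ (2 * i + 2 * j + 3) /
                (1 - (-q) ^ (k + 1)) = 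
    (2 * (-1)^i) * ((-1)^j * (((2*(i+j+1)).factorial : ℝ) * 
      PowerSeries.coeff (2*(i+j+1)) (fP (-q) - PowerSeries.C (PowerSeries.coeff 0 (fP (-q)))))) := by
  have hq : |-q| < 1 := by rwa [abs_neg, abs_of_pos h0]
  rw [map_sub, PowerSeries.coeff_C, if_neg (by omega), sub_zero, coeff_fP_even (-q) (i+j+1), tangentNum,
    abs_bernoulli _ (by omega)]
  have hs : Summable fun k : ℕ => (-1)^k * (lx (-q) k * (k:ℝ)^(2*(i+j+1)+1)) := by
    have hs := summ_lam_pow (-q) hq (2*(i+j+1)+1)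
    rw [← summable_abs_iff] at hs ⊢
    refine hs.congr fun k => ?_
    rw [abs_mul ((-1)^k), abs_pow, abs_neg, abs_one, one_pow, one_mul]
  have e : ∑' k : ℕ, (-1)^k * (lx (-q) k * (k:ℝ)^(2*(i+j+1)+1)) = 
      ∑' k : ℕ, q ^ (k + 1) * ((k : ℝ) + 1) ^ (2 * i + 2 * j + 3) / (1 - (-q) ^ (k + 1)) := by
    rw [hs.tsum_eq_zero_add, lx_zero]
    simp only [zero_mul, mul_zero, zero_add]
    refine tsum_congr fun k => ?_
    rw [lx]
    have : (-1:ℝ)^(k+1) * (-q)^(k+1) = q^(k+1) := by rw [← mul_pow]; simp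
    rw [← this]
    push_cast
    rw [show 2 * (i+j+1) + 1 = 2 * i + 2 * j + 3 by ring]
    ring
  rw [e]
  have e2 : 2 * (i + j + 1) + 2 = 2 * (i + j + 2) := by ring
  rw [e2]
  generalize ((bernoulli (2 * (i + j + 2)) : ℚ) : ℝ) = b
  rw [show (4:ℝ) = 2^2 by norm_num, ← pow_mul]
  generalize (2:ℝ)^(2 * (i+j+2)) = z
  push_cast
  have hn : ((i:ℝ) + j + 2) ≠ 0 := by positivity
  have hn2 : (2 * ((i:ℝ) + j + 1) + 2) ≠ 0 := by positivity
  have e3 : (-1:ℝ)^(i+j+2+1) = - ((-1)^i * (-1)^j) := by rw [pow_add, pow_add, pow_add]; ring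
  rw [e3, pow_add]
  field_simp
  ring

lemma final_V (q : ℝ) (h0 : 0 < q) (h1 : q < 1) (m : ℕ) :
    Matrix.det (Matrix.of fun i j : Fin m => (((2*((i:ℕ)+(j:ℕ)+1)).factorial : ℝ) * 
      PowerSeries.coeff (2*((i:ℕ)+(j:ℕ)+1)) (fP (-q) - PowerSeries.C (PowerSeries.coeff 0 (fP (-q))))))
    = ∏ i ∈ range m, (((2*i+1).factorial : ℝ) * ((2*i+2).factorial : ℝ) * (sqGen q^8/16)^(i+1)) := by
  have hq : |-q| < 1 := by rwa [abs_neg, abs_of_pos h0]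
  set P0 := PowerSeries.coeff 0 (fP (-q)) with hP0
  have ha : 6 * P0^2 + (1 - 24 * lG 1 (-q)) * P0 + lgam (-q) = sqGen q^8/8 := by
    rw [← fP_const (-q) hq, coeff_two_fP (-q) hq, theta_eight q h0 h1, neg_sq]
    ring
  have h := ode_det (fP (-q) - PowerSeries.C P0) (sqGen q^8/8) (12 * P0 + (1 - 24 * lG 1 (-q)))
    (by rw [map_sub, PowerSeries.coeff_zero_C, sub_self])
    (by rw [map_sub, coeff_one_fP, PowerSeries.coeff_C]; simp) (by
      have hd : PowerSeries.derivative ℝ (fP (-q) - PowerSeries.C P0) = PowerSeries.derivative ℝ (fP (-q)) := by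
        rw [map_sub, PowerSeries.derivative_C, sub_zero]
      rw [hd, fP_ode (-q) hq, lG_one, ← ha]
      simp only [map_add, map_mul, map_pow, map_ofNat]
      ring) m
  rw [h]
  refine prod_congr rfl fun i _ => ?_
  rw [div_div]; norm_num

lemma final_num (θ : ℝ) (m : ℕ) : (2:ℝ)^(m*(2*m+1)) * 
    (2^m * ∏ i ∈ range m, (((2*i+1).factorial : ℝ) * ((2*i+2).factorial : ℝ) * (θ^8/16)^(i+1))) =
    θ^(4*m*(m+1)) * ∏ i ∈ Finset.Icc 1 (2 * m), (Nat.factorial i : ℝ) := by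
  induction m with
  | zero => simp
  | succ m ih =>
    rw [prod_range_succ, show 2 * (m+1) = 2*m+1+1 by ring, Finset.prod_Icc_succ_top (by omega),
      Finset.prod_Icc_succ_top (by omega)]
    have e1 : θ^(4*(m+1)*(m+1+1)) = θ^(4*m*(m+1)) * (θ^8)^(m+1) := by
      rw [← pow_mul, ← pow_add]; congr 1; ring
    have e2 : (2:ℝ)^((m+1)*(2*m+1+1+1)) * 2^(m+1) = 2^(m*(2*m+1)) * 2^m * 16^(m+1) := by
      rw [show (16:ℝ) = 2^4 by norm_num, ← pow_mul, ← pow_add, ← pow_add, ← pow_add]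
      congr 1; ring
    rw [e1, div_pow]
    have h16 : (16:ℝ)^(m+1) ≠ 0 := by positivity
    calc _ = ((2:ℝ)^((m+1)*(2*m+1+1+1)) * 2^(m+1)) * ((∏ i ∈ range m, (((2*i+1).factorial : ℝ) * ((2*i+2).factorial : ℝ) * (θ^8/16)^(i+1)))
          * (((2*m+1).factorial : ℝ) * ((2*m+2).factorial : ℝ) * ((θ^8)^(m+1)/16^(m+1)))) := by ring
      _ = ((2:ℝ)^(m*(2*m+1)) * 
    (2^m * ∏ i ∈ range m, (((2*i+1).factorial : ℝ) * ((2*i+2).factorial : ℝ) * (θ^8/16)^(i+1)))) * 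
           (((2*m+1).factorial : ℝ) * ((2*m+2).factorial : ℝ) * (θ^8)^(m+1)) := by
          rw [e2]; field_simp
      _ = _ := by rw [ih]; ring

lemma det_sign (m : ℕ) (M : Fin m → Fin m → ℝ) :
    Matrix.det (Matrix.of fun i j : Fin m => (2 * (-1:ℝ)^(i:ℕ)) * ((-1)^(j:ℕ) * M i j)) =
     2^m * Matrix.det (Matrix.of M) := by
  have a := Matrix.det_mul_column (fun i : Fin m => 2 * (-1:ℝ)^(i:ℕ)) (Matrix.of fun i j => (-1)^(j:ℕ) * M i j)
  have b := Matrix.det_mul_row (fun i : Fin m => (-1:ℝ)^(i:ℕ)) (Matrix.of M)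
  simp only [Matrix.of_apply] at a b
  rw [a, b, ← mul_assoc, ← prod_mul_distrib]
  congr 1
  have : ∀ i : Fin m, 2 * (-1:ℝ)^(i:ℕ) * (-1)^(i:ℕ) = 2 := by
    intro i; rw [mul_assoc, ← mul_pow]; norm_num
  rw [prod_congr rfl fun i _ => this i]
  simp

theorem final_main (q : ℝ) (hq0 : 0 < q) (hq1 : q < 1) (m : ℕ) :
    sqGen q ^ (4 * m * (m + 1)) =
      ((2 : ℝ) ^ (m * (2 * m + 1)) / ∏ i ∈ Finset.Icc 1 (2 * m), (Nat.factorial i : ℝ)) *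
        Matrix.det (Matrix.of fun i j : Fin m =>
          tangentNum ((i : ℕ) + (j : ℕ) + 2) +
            4 * (-1 : ℝ) ^ ((i : ℕ) + (j : ℕ)) *
              ∑' k : ℕ, q ^ (k + 1) * ((k : ℝ) + 1) ^ (2 * (i : ℕ) + 2 * (j : ℕ) + 3) /
                (1 - (-q) ^ (k + 1))) := by
  have hprod : ∏ i ∈ Finset.Icc 1 (2 * m), (Nat.factorial i : ℝ) ≠ 0 :=
    Finset.prod_ne_zero_iff.mpr fun i _ => by positivity
  have e : (Matrix.of fun i j : Fin m =>
          tangentNum ((i : ℕ) + (j : ℕ) + 2) +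
            4 * (-1 : ℝ) ^ ((i : ℕ) + (j : ℕ)) *
              ∑' k : ℕ, q ^ (k + 1) * ((k : ℝ) + 1) ^ (2 * (i : ℕ) + 2 * (j : ℕ) + 3) /
                (1 - (-q) ^ (k + 1))) = Matrix.of fun i j : Fin m => (2 * (-1:ℝ)^(i:ℕ)) * ((-1)^(j:ℕ) * 
      (((2*((i:ℕ)+(j:ℕ)+1)).factorial : ℝ) * 
      PowerSeries.coeff (2*((i:ℕ)+(j:ℕ)+1)) (fP (-q) - PowerSeries.C (PowerSeries.coeff 0 (fP (-q)))))) := by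
    ext i j
    simp only [Matrix.of_apply]
    exact final_entry q hq0 hq1 i j
  rw [e, det_sign, final_V q hq0 hq1, div_mul_eq_mul_div, final_num, mul_div_assoc, div_self hprod, mul_one]

end

/-- Milne's `4m(m+1)` squares formula in Hankel determinant form:
`□(q)^{4m(m+1)} = (2^{m(2m+1)} / Π_{i=1}^{2m} i!) ·
  det( t_{i+j} + 4(−1)^{i+j} Σ_{k≥1} q^k k^{2i+2j−1}/(1−(−q)^k) )_{1≤i,j≤m}`. -/
theorem milne_hankel_4mm1 (q : ℝ) (hq0 : 0 < q) (hq1 : q < 1) (m : ℕ) (hm : 1 ≤ m) :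
    sqGen q ^ (4 * m * (m + 1)) =
      ((2 : ℝ) ^ (m * (2 * m + 1)) / ∏ i ∈ Finset.Icc 1 (2 * m), (Nat.factorial i : ℝ)) *
        Matrix.det (Matrix.of fun i j : Fin m =>
          tangentNum ((i : ℕ) + (j : ℕ) + 2) +
            4 * (-1 : ℝ) ^ ((i : ℕ) + (j : ℕ)) *
              ∑' k : ℕ, q ^ (k + 1) * ((k : ℝ) + 1) ^ (2 * (i : ℕ) + 2 * (j : ℕ) + 3) /
                (1 - (-q) ^ (k + 1))) := by
  exact final_main q hq0 hq1 m
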